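/- arXiv:2311.05926 — 4 statements merged into one kernel-verified Lean document; each statement's English description precedes it below -/
import Mathlib

section
/- Let T > 0 and let D ⊂ ℝ^d (d ≥ 1) be a bounded, open, connected set, D̄ its closure, ∂D its boundary. Let d' > 0 be a constant. Let w : [0,T] × D̄ → ℝ be continuous, and assume that on (0,T] × D the time derivative ∂w/∂t exists and is continuous and w(t,·) is twice continuously differentiable in x. Let c₁, c₂, c₃, c₄ : (0,T] × D → ℝ be bounded measurable functions with c₂ ≥ 0, c₃ ≥ 0, c₄ ≥ 0. Assume: (i) for all (t,x) ∈ (0,T] × D, ∂w/∂t(t,x) − d'·Δw(t,x) ≥ c₁(t,x)·w(t,x) + c₃(t,x)·∫_D c₂(t,y)·w(t,y) dy + ∫_D c₄(t,y)·w(t,y) dy; (ii) w(t,x) ≥ 0 for all t ∈ [0,T] and x ∈ ∂D; (iii) w(0,x) ≥ 0 for all x ∈ D; and (iv) w(0,·) is not identically zero on D. Then w(t,x) > 0 for all (t,x) ∈ (0,T] × D. -/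
open MeasureTheory Real Set

/-- The Laplacian in the spatial variable: `Δf(x) = ∑ i, ∂²f(x)/∂xᵢ²`. -/
noncomputable def laplacian {d : ℕ} (f : EuclideanSpace ℝ (Fin d) → ℝ)
    (x : EuclideanSpace ℝ (Fin d)) : ℝ :=
  ∑ i, fderiv ℝ (fun y => fderiv ℝ f y (EuclideanSpace.single i 1)) x (EuclideanSpace.single i 1)

open Filter Topology

theorem IsLocalMin.deriv_deriv_nonneg {f : ℝ → ℝ} {a : ℝ} (h : IsLocalMin f a)
    (hc : ContinuousAt f a) : 0 ≤ deriv (deriv f) a := by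
  by_contra! hneg
  have hmax := isLocalMax_of_deriv_deriv_neg hneg h.deriv_eq_zero hc
  have hconst : f =ᶠ[𝓝 a] fun _ => f a := by
    filter_upwards [h, hmax] with x h₁ h₂ using le_antisymm h₂ h₁
  rw [hconst.deriv.deriv_eq] at hneg
  simp at hneg

section Laplacian

variable {d : ℕ} {f g : EuclideanSpace ℝ (Fin d) → ℝ} {x : EuclideanSpace ℝ (Fin d)}

theorem ContDiffAt.differentiableAt_fderiv_apply (hf : ContDiffAt ℝ 2 f x)
    (v : EuclideanSpace ℝ (Fin d)) : DifferentiableAt ℝ (fun y => fderiv ℝ f y v) x :=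
  ((hf.fderiv_right (m := 1) (by norm_num)).differentiableAt (by norm_num)).clm_apply
    (differentiableAt_const v)

theorem ContDiffAt.eventually_differentiableAt (hf : ContDiffAt ℝ 2 f x) :
    ∀ᶠ y in 𝓝 x, DifferentiableAt ℝ f y := by
  filter_upwards [hf.eventually (by simp)] with y hy using hy.differentiableAt (by norm_num)

theorem laplacian_sub (hf : ContDiffAt ℝ 2 f x) (hg : ContDiffAt ℝ 2 g x) :
    laplacian (fun y => f y - g y) x = laplacian f x - laplacian g x := by
  unfold laplacian
  rw [← Finset.sum_sub_distrib]
  refine Finset.sum_congr rfl fun i _ => ?_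
  set v : EuclideanSpace ℝ (Fin d) := EuclideanSpace.single i 1
  have h : (fun y => fderiv ℝ (fun y => f y - g y) y v) =ᶠ[𝓝 x]
      fun y => fderiv ℝ f y v - fderiv ℝ g y v := by
    filter_upwards [hf.eventually_differentiableAt, hg.eventually_differentiableAt] with y h₁ h₂
    rw [fderiv_fun_sub h₁ h₂]
    rfl
  rw [h.fderiv_eq, fderiv_fun_sub (hf.differentiableAt_fderiv_apply v)
    (hg.differentiableAt_fderiv_apply v)]
  rfl

theorem laplacian_nonneg_of_isLocalMin (hf : ContDiffAt ℝ 2 f x) (h : IsLocalMin f x) :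
    0 ≤ laplacian f x := by
  refine Finset.sum_nonneg fun i _ => ?_
  set v : EuclideanSpace ℝ (Fin d) := EuclideanSpace.single i 1
  have hline : ∀ s : ℝ, HasDerivAt (fun s : ℝ => x + s • v) v s := fun s => by
    simpa using ((hasDerivAt_id s).smul_const v).const_add x
  have hx : x + (0 : ℝ) • v = x := by simp
  have htend : Tendsto (fun s : ℝ => x + s • v) (𝓝 0) (𝓝 x) := by
    simpa [hx] using (hline 0).continuousAt.tendsto
  have hderiv : deriv (fun s : ℝ => f (x + s • v)) =ᶠ[𝓝 0] fun s => fderiv ℝ f (x + s • v) v := by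
    filter_upwards [htend.eventually hf.eventually_differentiableAt] with s hs
    exact (hs.hasFDerivAt.comp_hasDerivAt s (hline s)).deriv
  have hderiv₂ : HasDerivAt (fun s : ℝ => fderiv ℝ f (x + s • v) v)
      (fderiv ℝ (fun y => fderiv ℝ f y v) x v) 0 := by
    have := (hf.differentiableAt_fderiv_apply v).hasFDerivAt
    rw [← hx] at this
    have := this.comp_hasDerivAt 0 (hline 0)
    rwa [hx] at this
  have hmin : IsLocalMin (fun s : ℝ => f (x + s • v)) 0 := by
    filter_upwards [htend.eventually h] with s hs
    simpa using hs
  have hcont : ContinuousAt (fun s : ℝ => f (x + s • v)) 0 := by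
    refine ContinuousAt.comp (g := f) ?_ (hline 0).continuousAt
    rw [hx]
    exact hf.continuousAt
  have := hmin.deriv_deriv_nonneg hcont
  rwa [hderiv.deriv_eq, hderiv₂.deriv] at this

theorem laplacian_const_mul_sub_norm_sq_sq (c ρ : ℝ) (x₀ : EuclideanSpace ℝ (Fin d)) :
    laplacian (fun y => c * (ρ - ‖y - x₀‖ ^ 2) ^ 2) x =
      c * (8 * ‖x - x₀‖ ^ 2 - 4 * d * (ρ - ‖x - x₀‖ ^ 2)) := by
  have hnorm : ∀ y, HasFDerivAt (fun y => ρ - ‖y - x₀‖ ^ 2) (-(2 • innerSL ℝ (y - x₀))) y :=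
    fun y => by
      simpa using (((hasFDerivAt_id y).sub_const x₀).norm_sq).const_sub ρ
  have hfirst : ∀ (i : Fin d) y, fderiv ℝ (fun y => c * (ρ - ‖y - x₀‖ ^ 2) ^ 2) y
      (EuclideanSpace.single i 1) = c * (-4 * ((ρ - ‖y - x₀‖ ^ 2) * (y i - x₀ i))) := by
    intro i y
    rw [(((hnorm y).pow 2).const_mul c).fderiv]
    simp [EuclideanSpace.inner_single_right, -mul_eq_mul_left_iff]
    ring
  have hcoord : ∀ i : Fin d, HasFDerivAt (fun y : EuclideanSpace ℝ (Fin d) => y i - x₀ i)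
      (EuclideanSpace.proj i : EuclideanSpace ℝ (Fin d) →L[ℝ] ℝ) x := fun i =>
    (EuclideanSpace.proj i : EuclideanSpace ℝ (Fin d) →L[ℝ] ℝ).hasFDerivAt.sub_const (x₀ i)
  have hsecond : ∀ i : Fin d, fderiv ℝ (fun y => fderiv ℝ
      (fun y => c * (ρ - ‖y - x₀‖ ^ 2) ^ 2) y (EuclideanSpace.single i 1)) x
      (EuclideanSpace.single i 1) =
      c * (8 * (x i - x₀ i) ^ 2 - 4 * (ρ - ‖x - x₀‖ ^ 2)) := by
    intro i
    simp_rw [hfirst i]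
    rw [((((hnorm x).fun_mul (hcoord i)).const_mul (-4)).const_mul c).fderiv]
    simp [EuclideanSpace.inner_single_right, -mul_eq_mul_left_iff]
    ring
  unfold laplacian
  simp_rw [hsecond, ← Finset.mul_sum, Finset.sum_sub_distrib, ← Finset.mul_sum]
  rw [EuclideanSpace.real_norm_sq_eq (x - x₀)]
  simp [-mul_eq_mul_left_iff]
  ring

end Laplacian

theorem le_mul_of_exp_mul_le {f : ℝ → ℝ} {f' t c : ℝ} (hf : HasDerivAt f f' t)
    (h : ∀ᶠ s in 𝓝[<] t, exp (-c * t) * f t ≤ exp (-c * s) * f s) : f' ≤ c * f t := by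
  have hg : HasDerivAt (fun s => exp (-c * s) * f s) (exp (-c * t) * (f' - c * f t)) t := by
    refine ((((hasDerivAt_id t).const_mul (-c)).exp).fun_mul hf).congr_deriv ?_
    simp only [id]
    ring
  have hslope := (hasDerivAt_iff_tendsto_slope_left_right.1 hg).1
  have hle : exp (-c * t) * (f' - c * f t) ≤ 0 := by
    refine le_of_tendsto hslope ?_
    filter_upwards [h, self_mem_nhdsWithin] with s hs hst
    rw [slope_def_field]
    exact div_nonpos_of_nonneg_of_nonpos (by linarith) (sub_nonpos.2 (le_of_lt hst))
  nlinarith [nonpos_of_mul_nonpos_right hle (exp_pos (-c * t))]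

theorem IsCompact.exists_neg_exp_mul_min {X : Type*} [TopologicalSpace X] {K : Set (ℝ × X)}
    (hK : IsCompact K) {z : ℝ × X → ℝ} (hz : ContinuousOn z K) (c : ℝ)
    (hneg : ∃ p ∈ K, z p < 0) :
    ∃ q ∈ K, z q < 0 ∧ ∀ p ∈ K, exp (-c * q.1) * z q ≤ exp (-c * p.1) * z p := by
  obtain ⟨p, hp, hzp⟩ := hneg
  obtain ⟨q, hq, hmin⟩ := hK.exists_isMinOn ⟨p, hp⟩
    (f := fun p => exp (-c * p.1) * z p) (by fun_prop)
  refine ⟨q, hq, ?_, fun r hr => hmin hr⟩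
  have h₁ : exp (-c * q.1) * z q ≤ exp (-c * p.1) * z p := hmin hp
  have h₂ : exp (-c * p.1) * z p < 0 := mul_neg_of_pos_of_neg (exp_pos _) hzp
  exact (pos_iff_neg_of_mul_neg (h₁.trans_lt h₂)).1 (exp_pos _)

theorem setIntegral_mul_ge {α : Type*} [MeasurableSpace α] {μ : Measure α} {D : Set α}
    (hD : MeasurableSet D) (hμ : μ D ≠ ⊤) {c u : α → ℝ} {M m : ℝ} (hm : 0 ≤ m) (hM : 0 ≤ M)
    (hc : ∀ y ∈ D, 0 ≤ c y) (hcM : ∀ y ∈ D, c y ≤ M) (hu : ∀ y ∈ D, -m ≤ u y) :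
    -(M * m * μ.real D) ≤ ∫ y in D, c y * u y ∂μ := by
  by_cases hint : IntegrableOn (fun y => c y * u y) D μ
  · have h := setIntegral_mono_on (f := fun _ => -(M * m)) (integrableOn_const hμ) hint hD
      fun y hy => by nlinarith [hc y hy, hcM y hy, hu y hy]
    simp only [setIntegral_const, smul_eq_mul] at h
    linarith
  · rw [integral_undef hint]
    have : 0 ≤ M * m * μ.real D := by positivity
    linarith

theorem mul_lt_sq_add_of_pos {a : ℝ} (ha : 0 < a) (k s : ℝ) :
    k * s < k ^ 2 / (2 * a) * s ^ 2 + a := by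
  have h : k ^ 2 / (2 * a) * s ^ 2 + a - k * s = ((k * s - a) ^ 2 + a ^ 2) / (2 * a) := by
    field_simp
    ring
  have : 0 < ((k * s - a) ^ 2 + a ^ 2) / (2 * a) := by positivity
  linarith

section Comparison

variable {d : ℕ} {T d' : ℝ} {D : Set (EuclideanSpace ℝ (Fin d))}
  {w wt : ℝ → EuclideanSpace ℝ (Fin d) → ℝ}

/-- Weak maximum principle for the non-local differential inequality. -/
theorem nonneg_of_nonlocal_supersolution (hDopen : IsOpen D) (hDbdd : Bornology.IsBounded D)
    (hd' : 0 < d')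
    (hw_cont : ContinuousOn (fun p : ℝ × EuclideanSpace ℝ (Fin d) => w p.1 p.2)
      (Icc 0 T ×ˢ closure D))
    (hw_t : ∀ t ∈ Ioc 0 T, ∀ x ∈ D, HasDerivAt (fun s => w s x) (wt t x) t)
    (hw_x : ∀ t ∈ Ioc 0 T, ContDiffOn ℝ 2 (w t) D)
    {c₁ c₂ c₃ c₄ : ℝ → EuclideanSpace ℝ (Fin d) → ℝ} {M : ℝ} (hM : 0 ≤ M)
    (hc₁ : ∀ t ∈ Ioc 0 T, ∀ x ∈ D, c₁ t x ≤ M)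
    (hc₂ : ∀ t ∈ Ioc 0 T, ∀ x ∈ D, c₂ t x ∈ Icc 0 M)
    (hc₃ : ∀ t ∈ Ioc 0 T, ∀ x ∈ D, c₃ t x ∈ Icc 0 M)
    (hc₄ : ∀ t ∈ Ioc 0 T, ∀ x ∈ D, c₄ t x ∈ Icc 0 M)
    (hineq : ∀ t ∈ Ioc 0 T, ∀ x ∈ D,
      c₁ t x * w t x + c₃ t x * (∫ y in D, c₂ t y * w t y)
        + (∫ y in D, c₄ t y * w t y) ≤ wt t x - d' * laplacian (w t) x)
    (hbdry : ∀ t ∈ Icc 0 T, ∀ x ∈ frontier D, 0 ≤ w t x)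
    (hinit : ∀ x ∈ D, 0 ≤ w 0 x) :
    ∀ t ∈ Icc 0 T, ∀ x ∈ D, 0 ≤ w t x := by
  by_contra! hcon
  obtain ⟨t₁, ht₁, x₁, hx₁, hneg₁⟩ := hcon
  set V := volume.real D
  have hV : 0 ≤ V := measureReal_nonneg
  set c := M + M * (M * V) + M * V + 1
  obtain ⟨⟨t, x⟩, ⟨ht, hx⟩, hneg, hmin⟩ :=
    (isCompact_Icc.prod hDbdd.isCompact_closure).exists_neg_exp_mul_min hw_cont c
      ⟨(t₁, x₁), ⟨ht₁, subset_closure hx₁⟩, hneg₁⟩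
  simp only [Prod.forall] at ht hx hneg hmin
  have hxD : x ∈ D := by
    by_contra hxD
    refine hneg.not_ge (hbdry t ht x ⟨hx, ?_⟩)
    rwa [hDopen.interior_eq]
  have ht0 : 0 < t := by
    refine ht.1.lt_of_ne fun h => ?_
    subst h
    exact hneg.not_ge (hinit x hxD)
  have ht' : t ∈ Ioc 0 T := ⟨ht0, ht.2⟩
  have hspace : ∀ y ∈ D, w t x ≤ w t y := fun y hy =>
    le_of_mul_le_mul_left (hmin t y ⟨ht, subset_closure hy⟩) (exp_pos _)
  have htime : wt t x ≤ c * w t x := by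
    refine le_mul_of_exp_mul_le (hw_t t ht' x hxD) ?_
    filter_upwards [Ioo_mem_nhdsLT ht0] with s hs
    exact hmin s x ⟨⟨hs.1.le, hs.2.le.trans ht.2⟩, hx⟩
  have hlap : 0 ≤ laplacian (w t) x := by
    refine laplacian_nonneg_of_isLocalMin ((hw_x t ht').contDiffAt (hDopen.mem_nhds hxD)) ?_
    filter_upwards [hDopen.mem_nhds hxD] with y hy using hspace y hy
  have hint : ∀ e : ℝ → EuclideanSpace ℝ (Fin d) → ℝ,
      (∀ t ∈ Ioc 0 T, ∀ x ∈ D, e t x ∈ Icc 0 M) →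
      M * w t x * V ≤ ∫ y in D, e t y * w t y := fun e he => by
    have := setIntegral_mul_ge (μ := volume) (c := e t) (u := w t) (m := -w t x)
      hDopen.measurableSet hDbdd.measure_lt_top.ne
      (by linarith) hM (fun y hy => (he t ht' y hy).1) (fun y hy => (he t ht' y hy).2)
      (fun y hy => by linarith [hspace y hy])
    linarith
  have h₂ := hint c₂ hc₂
  have h₄ := hint c₄ hc₄
  have h₁ : M * w t x ≤ c₁ t x * w t x := mul_le_mul_of_nonpos_right (hc₁ t ht' x hxD) hneg.le
  have h₃ : M * (M * w t x * V) ≤ c₃ t x * ∫ y in D, c₂ t y * w t y := by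
    obtain ⟨h0, hle⟩ := hc₃ t ht' x hxD
    have hnp : M * w t x * V ≤ 0 :=
      mul_nonpos_of_nonpos_of_nonneg (mul_nonpos_of_nonneg_of_nonpos hM hneg.le) hV
    exact (mul_le_mul_of_nonpos_right hle hnp).trans (mul_le_mul_of_nonneg_left h₂ h0)
  have := hineq t ht' x hxD
  have hd'lap := mul_nonneg hd'.le hlap
  have hc : c * w t x = M * w t x + M * (M * w t x * V) + M * w t x * V + w t x := by
    simp only [c]
    ring
  linarith

/-- Spreading of positivity for nonnegative supersolutions: positivity at a point propagates
instantaneously to any ball around it whose closure lies in the domain. -/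
theorem pos_of_pos_center (hDopen : IsOpen D) (hd' : 0 < d')
    (hw_cont : ContinuousOn (fun p : ℝ × EuclideanSpace ℝ (Fin d) => w p.1 p.2)
      (Icc 0 T ×ˢ closure D))
    (hw_t : ∀ t ∈ Ioc 0 T, ∀ x ∈ D, HasDerivAt (fun s => w s x) (wt t x) t)
    (hw_x : ∀ t ∈ Ioc 0 T, ContDiffOn ℝ 2 (w t) D) {M : ℝ}
    (hsuper : ∀ t ∈ Ioc 0 T, ∀ x ∈ D, -M * w t x ≤ wt t x - d' * laplacian (w t) x)
    (hnn : ∀ t ∈ Icc 0 T, ∀ x ∈ D, 0 ≤ w t x)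
    {t₀ t₁ R : ℝ} {x₀ x₁ : EuclideanSpace ℝ (Fin d)} (ht₀ : 0 ≤ t₀) (ht₀₁ : t₀ < t₁)
    (ht₁ : t₁ ≤ T) (hball : Metric.closedBall x₀ R ⊆ D) (hx₁ : x₁ ∈ Metric.ball x₀ R)
    (hpos : 0 < w t₀ x₀) : 0 < w t₁ x₁ := by
  have hR : 0 < R := Metric.pos_of_mem_ball hx₁
  have hx₀ : x₀ ∈ D := hball (Metric.mem_closedBall_self hR.le)
  obtain ⟨r, hr, hrR, hδ⟩ : ∃ r > 0, r < R ∧ ∀ y, ‖y - x₀‖ ≤ r → w t₀ x₀ / 2 ≤ w t₀ y := by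
    have hcont : ContinuousAt (w t₀) x₀ := by
      have : ContinuousOn (w t₀) D := hw_cont.comp (f := fun y => (t₀, y)) (by fun_prop)
        fun y hy => ⟨⟨ht₀, ht₀₁.le.trans ht₁⟩, subset_closure hy⟩
      exact this.continuousAt (hDopen.mem_nhds hx₀)
    obtain ⟨η, hη, h⟩ := Metric.eventually_nhds_iff.1
      (hcont.eventually (lt_mem_nhds (half_lt_self hpos)))
    refine ⟨min η R / 2, by positivity, ?_, fun y hy => (h ?_).le⟩
    · linarith [min_le_right η R]
    · rw [dist_eq_norm]
      linarith [min_le_left η R]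
  set σ := (R ^ 2 - r ^ 2) / (t₁ - t₀)
  have hσ : 0 ≤ σ := div_nonneg (by nlinarith) (by linarith)
  have hσ₁ : σ * (t₁ - t₀) = R ^ 2 - r ^ 2 := div_mul_cancel₀ _ (by linarith)
  set ρ : ℝ → ℝ := fun t => r ^ 2 + σ * (t - t₀) with hρ
  have hρ₁ : ρ t₁ = R ^ 2 := by simp only [hρ]; linarith
  have hρ_ge : ∀ t, t₀ ≤ t → r ^ 2 ≤ ρ t := fun t ht => by
    have := mul_nonneg hσ (sub_nonneg.2 ht)
    simp only [hρ]; linarith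
  have hρ_le : ∀ t, t ≤ t₁ → ρ t ≤ R ^ 2 := fun t ht => by
    have := mul_le_mul_of_nonneg_left (sub_le_sub_right ht t₀) hσ
    simp only [hρ]; linarith
  have hρ_deriv : ∀ t, HasDerivAt ρ σ t := fun t => by
    exact ((((hasDerivAt_id t).sub_const t₀).const_mul σ).const_add (r ^ 2)).congr_deriv (mul_one σ)
  have hρ_cont : Continuous ρ := by fun_prop
  set k := 8 * d' + 4 * d * d' + 2 * σ
  set a := 8 * d' * r ^ 2
  have ha : 0 < a := by positivity
  set l := M + k ^ 2 / (2 * a) with hl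
  set ε := w t₀ x₀ / 2 * exp (l * t₀) / r ^ 4 with hε
  have hεpos : 0 < ε := by positivity
  set z : ℝ × EuclideanSpace ℝ (Fin d) → ℝ := fun p =>
    w p.1 p.2 - ε * exp (-l * p.1) * (ρ p.1 - ‖p.2 - x₀‖ ^ 2) ^ 2 with hz
  set K : Set (ℝ × EuclideanSpace ℝ (Fin d)) :=
    (Icc t₀ t₁ ×ˢ Metric.closedBall x₀ R) ∩ {p | ‖p.2 - x₀‖ ^ 2 ≤ ρ p.1} with hK
  have hmemK : ∀ t x, t ∈ Icc t₀ t₁ → ‖x - x₀‖ ^ 2 ≤ ρ t → (t, x) ∈ K := fun t x ht hx =>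
    ⟨⟨ht, by
      rw [mem_closedBall_iff_norm]
      exact le_of_sq_le_sq (hx.trans (hρ_le t ht.2)) hR.le⟩, hx⟩
  have hKcompact : IsCompact K :=
    (isCompact_Icc.prod (isCompact_closedBall x₀ R)).inter_right
      (isClosed_le (by fun_prop) (by fun_prop))
  have hKsub : K ⊆ Icc 0 T ×ˢ closure D := fun p hp =>
    ⟨⟨ht₀.trans hp.1.1.1, hp.1.1.2.trans ht₁⟩, subset_closure (hball hp.1.2)⟩
  have hzcont : ContinuousOn z K := (hw_cont.mono hKsub).sub (by fun_prop)
  have hz_nonneg : ∀ p ∈ K, 0 ≤ z p := by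
    by_contra! hcon
    obtain ⟨⟨t, x⟩, hq, hneg, hmin⟩ := hKcompact.exists_neg_exp_mul_min hzcont (-M) hcon
    have ht : t ∈ Icc t₀ t₁ := hq.1.1
    have hxD : x ∈ D := hball hq.1.2
    have hxρ : ‖x - x₀‖ ^ 2 ≤ ρ t := hq.2
    have hwnn := hnn t ⟨ht₀.trans ht.1, ht.2.trans ht₁⟩ x hxD
    have hlt : ‖x - x₀‖ ^ 2 < ρ t := by
      refine hxρ.lt_of_ne fun h => hneg.not_ge ?_
      simpa [hz, h] using hwnn
    have htlt : t₀ < t := by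
      refine ht.1.lt_of_ne fun h => hneg.not_ge ?_
      subst h
      have hρ₀ : ρ t₀ = r ^ 2 := by simp [hρ]
      rw [hρ₀] at hxρ
      have h₁ := hδ x (le_of_sq_le_sq hxρ hr.le)
      have h₂ : (r ^ 2 - ‖x - x₀‖ ^ 2) ^ 2 ≤ r ^ 4 := by
        have := sq_nonneg ‖x - x₀‖
        nlinarith
      have h₃ : ε * exp (-l * t₀) * r ^ 4 = w t₀ x₀ / 2 := by
        rw [hε, neg_mul, exp_neg]
        field_simp
      have h₄ := mul_le_mul_of_nonneg_left h₂ (mul_pos hεpos (exp_pos (-l * t₀))).le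
      simp only [hz, hρ₀]
      linarith
    have ht' : t ∈ Ioc 0 T := ⟨ht₀.trans_lt htlt, ht.2.trans ht₁⟩
    set E := ε * exp (-l * t) with hE
    have hEpos : 0 < E := mul_pos hεpos (exp_pos _)
    set s := ρ t - ‖x - x₀‖ ^ 2 with hs
    have hzt : HasDerivAt (fun τ => z (τ, x)) (wt t x - E * (-l * s ^ 2 + 2 * s * σ)) t := by
      have h₁ := (((hasDerivAt_id t).const_mul (-l)).exp).const_mul ε
      have h₂ := ((hρ_deriv t).sub_const (‖x - x₀‖ ^ 2)).fun_pow 2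
      refine ((hw_t t ht' x hxD).fun_sub (h₁.fun_mul h₂)).congr_deriv ?_
      simp only [hE, hs, id]
      ring
    have htime : wt t x - E * (-l * s ^ 2 + 2 * s * σ) ≤ -M * z (t, x) := by
      refine le_mul_of_exp_mul_le (f := fun τ => z (τ, x)) hzt ?_
      have hev : ∀ᶠ τ in 𝓝[<] t, ‖x - x₀‖ ^ 2 < ρ τ :=
        nhdsWithin_le_nhds (hρ_cont.continuousAt.eventually (lt_mem_nhds hlt))
      filter_upwards [Ioo_mem_nhdsLT htlt, hev] with τ hτ hτρ
      exact hmin (τ, x) (hmemK τ x ⟨hτ.1.le, hτ.2.le.trans ht.2⟩ hτρ.le)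
    have hwC : ContDiffAt ℝ 2 (w t) x := (hw_x t ht').contDiffAt (hDopen.mem_nhds hxD)
    have hbC : ContDiffAt ℝ 2 (fun y => E * (ρ t - ‖y - x₀‖ ^ 2) ^ 2) x := by
      have : ContDiff ℝ 2 fun y : EuclideanSpace ℝ (Fin d) => ‖y - x₀‖ ^ 2 :=
        (contDiff_id.sub contDiff_const).norm_sq ℝ
      exact (contDiff_const.mul ((contDiff_const.sub this).pow 2)).contDiffAt
    have hlap : 0 ≤ laplacian (fun y => w t y - E * (ρ t - ‖y - x₀‖ ^ 2) ^ 2) x := by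
      refine laplacian_nonneg_of_isLocalMin (hwC.sub hbC) ?_
      have hev : ∀ᶠ y in 𝓝 x, ‖y - x₀‖ ^ 2 < ρ t := by
        have : Continuous fun y : EuclideanSpace ℝ (Fin d) => ‖y - x₀‖ ^ 2 := by fun_prop
        exact this.continuousAt.eventually (gt_mem_nhds hlt)
      filter_upwards [hev] with y hy
      exact le_of_mul_le_mul_left (hmin (t, y) (hmemK t y ht hy.le)) (exp_pos _)
    rw [laplacian_sub hwC hbC, laplacian_const_mul_sub_norm_sq_sq] at hlap
    have hquad := mul_lt_sq_add_of_pos ha k s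
    have hprod : E * (k * s) < E * (k ^ 2 / (2 * a) * s ^ 2 + 8 * d' * ρ t) := by
      refine mul_lt_mul_of_pos_left (hquad.trans_le ?_) hEpos
      have := mul_le_mul_of_nonneg_left (hρ_ge t ht.1) (by positivity : 0 ≤ 8 * d')
      linarith
    have hnorm : ‖x - x₀‖ ^ 2 = ρ t - s := by rw [hs]; ring
    have hzval : z (t, x) = w t x - E * s ^ 2 := rfl
    rw [hzval] at htime
    rw [← hs, hnorm] at hlap
    have hd'lap := mul_nonneg hd'.le hlap
    have hsup := hsuper t ht' x hxD
    have hlM : k ^ 2 / (2 * a) = l - M := by rw [hl]; ring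
    rw [hlM] at hprod
    simp only [k] at hprod
    linarith
  have hx₁R : ‖x₁ - x₀‖ ^ 2 < R ^ 2 := by
    rw [mem_ball_iff_norm] at hx₁
    gcongr
  have hfin := hz_nonneg (t₁, x₁) (hmemK t₁ x₁ ⟨ht₀₁.le, le_rfl⟩ (by rw [hρ₁]; exact hx₁R.le))
  simp only [hz, hρ₁] at hfin
  have : 0 < ε * exp (-l * t₁) * (R ^ 2 - ‖x₁ - x₀‖ ^ 2) ^ 2 :=
    mul_pos (mul_pos hεpos (exp_pos _)) (pow_pos (sub_pos.2 hx₁R) 2)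
  linarith

end Comparison

/-- Non-local parabolic comparison principle (Lemma 3.2, strict positivity part). -/
theorem statement1 {d : ℕ} (hd : 1 ≤ d) {T : ℝ} (hT : 0 < T)
    {D : Set (EuclideanSpace ℝ (Fin d))} (hDopen : IsOpen D) (hDconn : IsConnected D)
    (hDbdd : Bornology.IsBounded D)
    {d' : ℝ} (hd' : 0 < d')
    (w wt : ℝ → EuclideanSpace ℝ (Fin d) → ℝ)
    -- `w` is continuous on `[0,T] × D̄`
    (hw_cont : ContinuousOn (fun p : ℝ × EuclideanSpace ℝ (Fin d) => w p.1 p.2)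
      (Icc 0 T ×ˢ closure D))
    -- the time derivative `∂w/∂t = wt` exists on `(0,T] × D` and is continuous there
    (hw_t : ∀ t ∈ Ioc 0 T, ∀ x ∈ D, HasDerivAt (fun s => w s x) (wt t x) t)
    (hwt_cont : ContinuousOn (fun p : ℝ × EuclideanSpace ℝ (Fin d) => wt p.1 p.2)
      (Ioc 0 T ×ˢ D))
    -- `w(t, ·)` is twice continuously differentiable in `x` on `D`
    (hw_x : ∀ t ∈ Ioc 0 T, ContDiffOn ℝ 2 (w t) D)
    (c₁ c₂ c₃ c₄ : ℝ → EuclideanSpace ℝ (Fin d) → ℝ)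
    -- the coefficients are measurable on `(0,T] × D`
    (hc₁meas : Measurable ((Ioc 0 T ×ˢ D).restrict
      fun p : ℝ × EuclideanSpace ℝ (Fin d) => c₁ p.1 p.2))
    (hc₂meas : Measurable ((Ioc 0 T ×ˢ D).restrict
      fun p : ℝ × EuclideanSpace ℝ (Fin d) => c₂ p.1 p.2))
    (hc₃meas : Measurable ((Ioc 0 T ×ˢ D).restrict
      fun p : ℝ × EuclideanSpace ℝ (Fin d) => c₃ p.1 p.2))
    (hc₄meas : Measurable ((Ioc 0 T ×ˢ D).restrict
      fun p : ℝ × EuclideanSpace ℝ (Fin d) => c₄ p.1 p.2))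
    -- the coefficients are bounded on `(0,T] × D`
    (hc₁bdd : ∃ M, ∀ t ∈ Ioc 0 T, ∀ x ∈ D, |c₁ t x| ≤ M)
    (hc₂bdd : ∃ M, ∀ t ∈ Ioc 0 T, ∀ x ∈ D, |c₂ t x| ≤ M)
    (hc₃bdd : ∃ M, ∀ t ∈ Ioc 0 T, ∀ x ∈ D, |c₃ t x| ≤ M)
    (hc₄bdd : ∃ M, ∀ t ∈ Ioc 0 T, ∀ x ∈ D, |c₄ t x| ≤ M)
    -- `c₂, c₃, c₄ ≥ 0`
    (hc₂nn : ∀ t ∈ Ioc 0 T, ∀ x ∈ D, 0 ≤ c₂ t x)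
    (hc₃nn : ∀ t ∈ Ioc 0 T, ∀ x ∈ D, 0 ≤ c₃ t x)
    (hc₄nn : ∀ t ∈ Ioc 0 T, ∀ x ∈ D, 0 ≤ c₄ t x)
    -- (i) the differential inequality
    (hineq : ∀ t ∈ Ioc 0 T, ∀ x ∈ D,
      c₁ t x * w t x + c₃ t x * (∫ y in D, c₂ t y * w t y)
        + (∫ y in D, c₄ t y * w t y) ≤ wt t x - d' * laplacian (w t) x)
    -- (ii) boundary nonnegativity
    (hbdry : ∀ t ∈ Icc 0 T, ∀ x ∈ frontier D, 0 ≤ w t x)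
    -- (iii) initial nonnegativity
    (hinit : ∀ x ∈ D, 0 ≤ w 0 x)
    -- (iv) the initial datum is not identically zero on `D`
    (hinit_ne : ¬ ∀ x ∈ D, w 0 x = 0) :
    ∀ t ∈ Ioc 0 T, ∀ x ∈ D, 0 < w t x := by
  obtain ⟨M₁, hM₁⟩ := hc₁bdd
  obtain ⟨M₂, hM₂⟩ := hc₂bdd
  obtain ⟨M₃, hM₃⟩ := hc₃bdd
  obtain ⟨M₄, hM₄⟩ := hc₄bdd
  set M := |M₁| + |M₂| + |M₃| + |M₄|
  have hM : 0 ≤ M := by positivity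
  have hle₁ : ∀ t ∈ Ioc 0 T, ∀ x ∈ D, |c₁ t x| ≤ M := fun t ht x hx => by
    have := (hM₁ t ht x hx).trans (le_abs_self M₁)
    have : 0 ≤ |M₂| + |M₃| + |M₄| := by positivity
    linarith
  have hle₂ : ∀ t ∈ Ioc 0 T, ∀ x ∈ D, c₂ t x ∈ Icc 0 M := fun t ht x hx => by
    have := ((le_abs_self _).trans (hM₂ t ht x hx)).trans (le_abs_self M₂)
    have : 0 ≤ |M₁| + |M₃| + |M₄| := by positivity
    exact ⟨hc₂nn t ht x hx, by linarith⟩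
  have hle₃ : ∀ t ∈ Ioc 0 T, ∀ x ∈ D, c₃ t x ∈ Icc 0 M := fun t ht x hx => by
    have := ((le_abs_self _).trans (hM₃ t ht x hx)).trans (le_abs_self M₃)
    have : 0 ≤ |M₁| + |M₂| + |M₄| := by positivity
    exact ⟨hc₃nn t ht x hx, by linarith⟩
  have hle₄ : ∀ t ∈ Ioc 0 T, ∀ x ∈ D, c₄ t x ∈ Icc 0 M := fun t ht x hx => by
    have := ((le_abs_self _).trans (hM₄ t ht x hx)).trans (le_abs_self M₄)
    have : 0 ≤ |M₁| + |M₂| + |M₃| := by positivity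
    exact ⟨hc₄nn t ht x hx, by linarith⟩
  have hnn := nonneg_of_nonlocal_supersolution hDopen hDbdd hd' hw_cont hw_t hw_x hM
    (fun t ht x hx => (le_abs_self _).trans (hle₁ t ht x hx)) hle₂ hle₃ hle₄ hineq hbdry hinit
  have hsuper : ∀ t ∈ Ioc 0 T, ∀ x ∈ D, -M * w t x ≤ wt t x - d' * laplacian (w t) x := by
    intro t ht x hx
    have hint : ∀ e : ℝ → EuclideanSpace ℝ (Fin d) → ℝ,
        (∀ t ∈ Ioc 0 T, ∀ x ∈ D, 0 ≤ e t x) → 0 ≤ ∫ y in D, e t y * w t y := fun e he =>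
      setIntegral_nonneg hDopen.measurableSet fun y hy =>
        mul_nonneg (he t ht y hy) (hnn t (Ioc_subset_Icc_self ht) y hy)
    have h₁ := mul_le_mul_of_nonneg_right (abs_le.1 (hle₁ t ht x hx)).1
      (hnn t (Ioc_subset_Icc_self ht) x hx)
    have h₃ := mul_nonneg (hc₃nn t ht x hx) (hint c₂ hc₂nn)
    linarith [hineq t ht x hx, hint c₄ hc₄nn]
  have hspread : ∀ {t₀ t₁ R : ℝ} {x₀ x₁ : EuclideanSpace ℝ (Fin d)}, 0 ≤ t₀ → t₀ < t₁ → t₁ ≤ T →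
      Metric.closedBall x₀ R ⊆ D → x₁ ∈ Metric.ball x₀ R → 0 < w t₀ x₀ → 0 < w t₁ x₁ :=
    pos_of_pos_center hDopen hd' hw_cont hw_t hw_x hsuper hnn
  set A : Set (EuclideanSpace ℝ (Fin d)) := {x | x ∈ D ∧ ∀ t ∈ Ioc 0 T, 0 < w t x}
  have hA : ∀ {x R}, Metric.closedBall x R ⊆ D → x ∈ A → Metric.ball x R ⊆ A :=
    fun hball hxA y hy => ⟨hball (Metric.ball_subset_closedBall hy), fun t ht =>
      hspread (half_pos ht.1).le (half_lt_self ht.1) ht.2 hball hy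
        (hxA.2 (t / 2) ⟨half_pos ht.1, (half_le_self ht.1.le).trans ht.2⟩)⟩
  suffices h : D ⊆ A from fun t ht x hx => (h hx).2 t ht
  refine hDconn.isPreconnected.subset_of_closure_inter_subset ?_ ?_ ?_
  · rw [Metric.isOpen_iff]
    intro x hx
    obtain ⟨R, hR, hball⟩ := Metric.nhds_basis_closedBall.mem_iff.1 (hDopen.mem_nhds hx.1)
    exact ⟨R, hR, hA hball hx⟩
  · push Not at hinit_ne
    obtain ⟨x, hx, hne⟩ := hinit_ne
    obtain ⟨R, hR, hball⟩ := Metric.nhds_basis_closedBall.mem_iff.1 (hDopen.mem_nhds hx)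
    exact ⟨x, hx, hx, fun t ht => hspread le_rfl ht.1 ht.2 hball (Metric.mem_ball_self hR)
      ((hinit x hx).lt_of_ne' hne)⟩
  · rintro x ⟨hxA, hxD⟩
    obtain ⟨R, hR, hball⟩ := Metric.nhds_basis_closedBall.mem_iff.1 (hDopen.mem_nhds hxD)
    obtain ⟨y, hyA, hxy⟩ := Metric.mem_closure_iff.1 hxA (R / 2) (half_pos hR)
    refine hA (R := R / 2) ((Metric.closedBall_subset_closedBall' ?_).trans hball) hyA hxy
    rw [dist_comm]
    linarith
end

section
/- Let T > 0, let D ⊂ ℝ^d (d ≥ 1) be a bounded open set, and let β : [0,T] → ℝ be a continuous function. Let k > 0, γ ≥ 0, δ ≥ 0, η ≥ 0 be constants and let p, q, n > 1 and m ≥ 0 be exponents. Let v : [0,T] × D̄ → ℝ be continuous and nonnegative, with ∂v/∂t continuous and v(t,·) twice continuously differentiable in x on (0,T] × D, satisfying for all (t,x) ∈ (0,T] × D: ∂v/∂t(t,x) = Δv(t,x) + γ·v(t,x) + e^{(q−1)ηβ(t)}·∫_D v(t,y)^q dy − k·e^{(p−1)ηβ(t)}·v(t,x)^p + δ·e^{(m+n−1)ηβ(t)}·v(t,x)^m·∫_D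 v(t,y)^n dy, with v(t,x) = 0 for x ∈ ∂D, t ∈ (0,T], and v(0,x) = f(x) for x ∈ D. Let V : [0,T] × D̄ → ℝ be continuous and strictly positive on (0,T] × D, with ∂V/∂t continuous and V(t,·) twice continuously differentiable in x on (0,T] × D, satisfying for all (t,x) ∈ (0,T] × D: ∂V/∂t(t,x) ≥ ΔV(t,x) + γ·V(t,x) + e^{(q−1)ηβ(t)}·∫_D V(t,y)^q dy − k·e^{(p−1)ηβ(t)}·V(t,x)^p + δ·e^{(m+n−1)ηβ(t)}·V(t,x)^m·∫_D V(t,y)^n dy, with V(t,x) ≥ 0 for x ∈ ∂D, t ∈ (0,T], and V(0,x) ≥ f(x) for x ∈ D. Then V(t,x) ≥ v(t,x) for all (t,x) ∈ [0,T] × D̄. -/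
open MeasureTheory Real Set

theorem second_deriv_nonpos_of_isLocalMax {F F₁ : ℝ → ℝ} {c a : ℝ}
    (hF : ∀ᶠ s in nhds a, HasDerivAt F (F₁ s) s) (hF₁ : HasDerivAt F₁ c a)
    (hmax : IsLocalMax F a) : c ≤ 0 := by
  by_contra! hc
  have h1 : deriv F =ᶠ[nhds a] F₁ := hF.mono fun s hs => hs.deriv
  have h2 : deriv (deriv F) a = c := by rw [h1.deriv_eq, hF₁.deriv]
  have hmin : IsLocalMin F a := isLocalMin_of_deriv_deriv_pos (by rwa [h2])
    hmax.deriv_eq_zero hF.self_of_nhds.continuousAt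
  have hconst : F =ᶠ[nhds a] fun _ => F a := by
    filter_upwards [hmax, hmin] with s h h' using le_antisymm h h'
  have h3 : deriv F =ᶠ[nhds a] fun _ => 0 := by
    simpa using hconst.deriv
  rw [h3.deriv_eq] at h2
  simp at h2
  linarith

theorem rpow_mul_second_deriv_le_of_isLocalMax {g g₁ G G₁ : ℝ → ℝ} {g₂ G₂ a θ : ℝ}
    (hθ : 0 < θ) (hθ' : θ ≤ 1)
    (hg : ∀ᶠ s in nhds a, HasDerivAt g (g₁ s) s) (hg₁ : HasDerivAt g₁ g₂ a)
    (hG : ∀ᶠ s in nhds a, HasDerivAt G (G₁ s) s) (hG₁ : HasDerivAt G₁ G₂ a)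
    (hG0 : 0 < G a) (hGg : G a < g a)
    (hmax : IsLocalMax (fun s => g s ^ θ - G s ^ θ) a) :
    g a ^ (θ - 1) * g₂ ≤ G a ^ (θ - 1) * G₂ := by
  have hg0 : 0 < g a := hG0.trans hGg
  have hgpos : ∀ᶠ s in nhds a, 0 < g s :=
    hg.self_of_nhds.continuousAt.eventually (lt_mem_nhds hg0)
  have hGpos : ∀ᶠ s in nhds a, 0 < G s :=
    hG.self_of_nhds.continuousAt.eventually (lt_mem_nhds hG0)
  have hF : ∀ᶠ s in nhds a, HasDerivAt (fun s => g s ^ θ - G s ^ θ)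
      (g₁ s * θ * g s ^ (θ - 1) - G₁ s * θ * G s ^ (θ - 1)) s := by
    filter_upwards [hg, hG, hgpos, hGpos] with s h1 h2 h3 h4
    exact (h1.rpow_const (Or.inl h3.ne')).sub (h2.rpow_const (Or.inl h4.ne'))
  have hF₁ := (((hg₁.mul_const θ).mul
    (hg.self_of_nhds.rpow_const (p := θ - 1) (Or.inl hg0.ne'))).sub
    ((hG₁.mul_const θ).mul
    (hG.self_of_nhds.rpow_const (p := θ - 1) (Or.inl hG0.ne'))))
  have hsecond := second_deriv_nonpos_of_isLocalMax hF hF₁ hmax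
  have hfirst := hmax.hasDerivAt_eq_zero hF.self_of_nhds
  have eg : g a ^ (θ - 1 - 1) = (g a ^ (θ - 1)) ^ 2 * (g a ^ θ)⁻¹ := by
    rw [← rpow_neg hg0.le, ← rpow_natCast, ← rpow_mul hg0.le, ← rpow_add hg0]
    congr 1; push_cast; ring
  have eG : G a ^ (θ - 1 - 1) = (G a ^ (θ - 1)) ^ 2 * (G a ^ θ)⁻¹ := by
    rw [← rpow_neg hG0.le, ← rpow_natCast, ← rpow_mul hG0.le, ← rpow_add hG0]
    congr 1; push_cast; ring
  have hinv : (g a ^ θ)⁻¹ ≤ (G a ^ θ)⁻¹ :=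
    inv_anti₀ (rpow_pos_of_pos hG0 _) (rpow_le_rpow hG0.le hGg.le hθ.le)
  rw [eg, eG] at hsecond
  have hP : g₁ a * g a ^ (θ - 1) = G₁ a * G a ^ (θ - 1) := by
    have : θ * (g₁ a * g a ^ (θ - 1)) = θ * (G₁ a * G a ^ (θ - 1)) := by linarith
    exact mul_left_cancel₀ hθ.ne' this
  have hP2 : (g₁ a * g a ^ (θ - 1)) ^ 2 = (G₁ a * G a ^ (θ - 1)) ^ 2 := by rw [hP]
  have hgrad : 0 ≤ (1 - θ) * (G₁ a * G a ^ (θ - 1)) ^ 2 * ((G a ^ θ)⁻¹ - (g a ^ θ)⁻¹) :=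
    mul_nonneg (mul_nonneg (by linarith) (sq_nonneg _)) (by linarith)
  have : θ * (g a ^ (θ - 1) * g₂ - G a ^ (θ - 1) * G₂
      + (1 - θ) * (G₁ a * G a ^ (θ - 1)) ^ 2 * ((G a ^ θ)⁻¹ - (g a ^ θ)⁻¹)) ≤ 0 := by
    refine le_of_eq_of_le ?_ hsecond
    linear_combination θ * (1 - θ) * (g a ^ θ)⁻¹ * hP2
  have := nonpos_of_mul_nonpos_right this hθ
  linarith

theorem deriv_nonneg_of_isMax_left {φ : ℝ → ℝ} {c t : ℝ} (ht : 0 < t)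
    (hφ : HasDerivAt φ c t) (hmax : ∀ s ∈ Ioc 0 t, φ s ≤ φ t) : 0 ≤ c := by
  have h := (hasDerivAt_iff_tendsto_slope_left_right.1 hφ).1
  refine ge_of_tendsto h ?_
  filter_upwards [Ioo_mem_nhdsLT ht] with s hs
  rw [slope_def_field]
  exact div_nonneg_of_nonpos (by linarith [hmax s ⟨hs.1, hs.2.le⟩]) (by linarith [hs.2])

/-- Convexity of `z ↦ z ^ (r / θ)`, read in the variable `z = u ^ θ`. -/
theorem rpow_le_rpow_add_of_rpow_le {a b R μ θ r : ℝ} (hθ : 0 < θ) (hr : θ ≤ r) (ha : 0 ≤ a)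
    (hb : 0 ≤ b) (haR : a ≤ R) (hμ : 0 ≤ μ) (h : a ^ θ ≤ b ^ θ + μ) :
    a ^ r ≤ b ^ r + r / θ * R ^ (r - θ) * μ := by
  have hR : 0 ≤ R := ha.trans haR
  have hr0 : 0 < r := hθ.trans_le hr
  have hC : 0 ≤ r / θ * R ^ (r - θ) := by positivity
  rcases le_or_gt a b with hab | hab
  · have := rpow_le_rpow ha hab hr0.le
    nlinarith [mul_nonneg hC hμ]
  have ha0 : 0 < a := hb.trans_lt hab
  have haθ : 0 < a ^ θ := rpow_pos_of_pos ha0 _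
  have hbern := one_add_mul_self_le_rpow_one_add (s := b ^ θ / a ^ θ - 1) (p := r / θ)
    (by linarith [div_nonneg (rpow_nonneg hb θ) haθ.le]) ((one_le_div hθ).2 hr)
  rw [add_sub_cancel, div_rpow (rpow_nonneg hb _) haθ.le, ← rpow_mul hb, ← rpow_mul ha,
    mul_div_cancel₀ _ hθ.ne', le_div_iff₀ (rpow_pos_of_pos ha0 _)] at hbern
  have e : a ^ r = a ^ (r - θ) * a ^ θ := by rw [← rpow_add ha0]; congr 1; ring
  have e2 : (1 + r / θ * (b ^ θ / a ^ θ - 1)) * a ^ r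
      = a ^ r - r / θ * a ^ (r - θ) * (a ^ θ - b ^ θ) := by
    rw [e]; field_simp; ring
  rw [e2] at hbern
  have h3 : r / θ * a ^ (r - θ) * (a ^ θ - b ^ θ) ≤ r / θ * R ^ (r - θ) * μ := by
    refine mul_le_mul ?_ (by linarith) ?_ hC
    · gcongr
    · linarith [rpow_le_rpow hb hab.le hθ.le]
  linarith

theorem rpow_sub_one_gap {a b θ : ℝ} (hθ' : θ < 1) (hb : 0 < b) (hab : b < a) :
    (1 - θ) * a⁻¹ * (a ^ θ - b ^ θ) ≤ b ^ (θ - 1) - a ^ (θ - 1) := by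
  have ha : 0 < a := hb.trans hab
  set τ := b / a with hτ
  have hτ0 : 0 < τ := div_pos hb ha
  have hτ1 : τ ≤ 1 := ((div_lt_one ha).2 hab).le
  have hbτ : b = τ * a := by rw [hτ]; field_simp
  have h1 : 1 + (1 - θ) * (1 - τ) ≤ τ ^ (θ - 1) := by
    rw [rpow_def_of_pos hτ0]
    have := add_one_le_exp (log τ * (θ - 1))
    nlinarith [log_le_sub_one_of_pos hτ0]
  have h2 : τ ≤ τ ^ θ := by
    simpa using rpow_le_rpow_of_exponent_ge hτ0 hτ1 hθ'.le
  have e : a ^ θ = a ^ (θ - 1) * a := by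
    rw [← rpow_add_one ha.ne']; congr 1; ring
  rw [hbτ, mul_rpow hτ0.le ha.le, mul_rpow hτ0.le ha.le, e]
  have e3 : (1 - θ) * a⁻¹ * (a ^ (θ - 1) * a - τ ^ θ * (a ^ (θ - 1) * a))
    = a ^ (θ - 1) * ((1 - θ) * (1 - τ ^ θ)) := by field_simp
  have e4 : τ ^ (θ - 1) * a ^ (θ - 1) - a ^ (θ - 1) = a ^ (θ - 1) * (τ ^ (θ - 1) - 1) := by ring
  rw [e3, e4]
  gcongr
  nlinarith

theorem exists_mul_rpow_sub_one_le {θ s C : ℝ} (hθ : 0 < θ) (hθ' : θ < 1) (hs : 0 < s)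
    (hC : 0 < C) :
    ∃ K, 0 ≤ K ∧ ∀ a : ℝ, 0 < a → C * a ^ (θ - 1) ≤ s * a⁻¹ + K := by
  set r := (s / C) ^ θ⁻¹ with hr
  have hr0 : 0 < r := by positivity
  refine ⟨C * r ^ (θ - 1), by positivity, fun a ha => ?_⟩
  rcases le_or_gt a r with har | har
  · have h1 : a ^ θ ≤ s / C := by
      have := rpow_le_rpow ha.le har hθ.le
      rwa [hr, ← rpow_mul (by positivity), inv_mul_cancel₀ hθ.ne', rpow_one] at this
    have e : C * a ^ (θ - 1) = C * a ^ θ * a⁻¹ := by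
      rw [rpow_sub_one ha.ne']; ring
    have h2 : C * a ^ θ ≤ s := by rw [le_div_iff₀ hC] at h1; linarith
    have : 0 ≤ C * r ^ (θ - 1) := by positivity
    rw [e]
    nlinarith [mul_le_mul_of_nonneg_right h2 (inv_pos.2 ha).le]
  · have h1 : a ^ (θ - 1) ≤ r ^ (θ - 1) :=
      rpow_le_rpow_of_nonpos hr0 har.le (by linarith)
    have : 0 ≤ s * a⁻¹ := by positivity
    nlinarith [mul_le_mul_of_nonneg_left h1 hC.le]

theorem continuousOn_setIntegral_rpow {E : Type*} [NormedAddCommGroup E] [NormedSpace ℝ E]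
    [FiniteDimensional ℝ E] [MeasureSpace E] [BorelSpace E]
    [IsFiniteMeasureOnCompacts (volume : Measure E)] {D : Set E} (hDopen : IsOpen D)
    (hDbdd : Bornology.IsBounded D) {T r : ℝ} (hr : 0 ≤ r) {u : ℝ → E → ℝ}
    (hu : ContinuousOn (fun pr : ℝ × E => u pr.1 pr.2) (Icc 0 T ×ˢ closure D)) :
    ContinuousOn (fun t => ∫ y in D, u t y ^ r) (Icc 0 T) := by
  have hcpt : IsCompact (Icc (0 : ℝ) T ×ˢ closure D) := isCompact_Icc.prod hDbdd.isCompact_closure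
  have hur := hu.rpow_const (p := r) fun _ _ => Or.inr hr
  obtain ⟨C, hC⟩ := hcpt.exists_bound_of_continuousOn hur
  have hfin : volume D ≠ ⊤ :=
    ((measure_mono subset_closure).trans_lt hDbdd.isCompact_closure.measure_lt_top).ne
  refine continuousOn_of_dominated (bound := fun _ => C) ?_ ?_ ?_ ?_
  · intro t ht
    refine ContinuousOn.aestronglyMeasurable ?_ hDopen.measurableSet
    exact hur.comp (f := fun y => (t, y)) (by fun_prop) fun y hy => ⟨ht, subset_closure hy⟩
  · intro t ht
    refine (ae_restrict_iff' hDopen.measurableSet).2 (Filter.Eventually.of_forall fun y hy => ?_)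
    exact hC (t, y) ⟨ht, subset_closure hy⟩
  · exact integrableOn_const hfin
  · refine (ae_restrict_iff' hDopen.measurableSet).2 (Filter.Eventually.of_forall fun y hy => ?_)
    exact hur.comp (f := fun t => (t, y)) (by fun_prop) fun t ht => ⟨ht, subset_closure hy⟩

theorem rpow_mul_laplacian_le_of_isLocalMax {d : ℕ} {D : Set (EuclideanSpace ℝ (Fin d))}
    (hDopen : IsOpen D) {g G : EuclideanSpace ℝ (Fin d) → ℝ} {x : EuclideanSpace ℝ (Fin d)}
    {θ : ℝ} (hθ : 0 < θ) (hθ' : θ ≤ 1) (hx : x ∈ D) (hg : ContDiffOn ℝ 2 g D)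
    (hG : ContDiffOn ℝ 2 G D) (hG0 : 0 < G x) (hGg : G x < g x)
    (hmax : IsLocalMax (fun y => g y ^ θ - G y ^ θ) x) :
    g x ^ (θ - 1) * laplacian g x ≤ G x ^ (θ - 1) * laplacian G x := by
  unfold laplacian
  rw [Finset.mul_sum, Finset.mul_sum]
  refine Finset.sum_le_sum fun i _ => ?_
  set e : EuclideanSpace ℝ (Fin d) := EuclideanSpace.single i 1
  have hline : ∀ s : ℝ, HasDerivAt (fun s : ℝ => x + s • e) e s := fun s => by
    simpa using ((hasDerivAt_id s).smul_const e).const_add x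
  have hline0 : x + (0 : ℝ) • e = x := by simp
  have hcont : ContinuousAt (fun s : ℝ => x + s • e) 0 := (hline 0).continuousAt
  have hmem : ∀ᶠ s : ℝ in nhds 0, x + s • e ∈ D :=
    hcont.eventually (by beta_reduce; rw [hline0]; exact hDopen.mem_nhds hx)
  have first : ∀ u : EuclideanSpace ℝ (Fin d) → ℝ, ContDiffOn ℝ 2 u D →
      ∀ᶠ s : ℝ in nhds 0, HasDerivAt (fun s : ℝ => u (x + s • e))
        (fderiv ℝ u (x + s • e) e) s := fun u hu => by
    filter_upwards [hmem] with s hs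
    exact (((hu.differentiableOn (by norm_num)).differentiableAt
      (hDopen.mem_nhds hs)).hasFDerivAt).comp_hasDerivAt s (hline s)
  have second : ∀ u : EuclideanSpace ℝ (Fin d) → ℝ, ContDiffOn ℝ 2 u D →
      HasDerivAt (fun s : ℝ => fderiv ℝ u (x + s • e) e)
        (fderiv ℝ (fun y => fderiv ℝ u y e) x e) 0 := fun u hu => by
    have h1 : ContDiffOn ℝ 1 (fderiv ℝ u) D := hu.fderiv_of_isOpen hDopen (by norm_num)
    have h2 : DifferentiableAt ℝ (fun y => fderiv ℝ u y e) (x + (0 : ℝ) • e) := by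
      rw [hline0]
      exact ((h1.differentiableOn (by norm_num)).differentiableAt
        (hDopen.mem_nhds hx)).clm_apply (differentiableAt_const e)
    have h3 := h2.hasFDerivAt.comp_hasDerivAt (0 : ℝ) (hline 0)
    rwa [hline0] at h3
  have hmax' : IsLocalMax (fun s : ℝ => g (x + s • e) ^ θ - G (x + s • e) ^ θ) 0 := by
    have h : ∀ᶠ y in nhds (x + (0 : ℝ) • e), g y ^ θ - G y ^ θ ≤ g x ^ θ - G x ^ θ := by
      rw [hline0]; exact hmax
    have := hcont.eventually h
    filter_upwards [this] with s hs
    simpa using hs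
  have := rpow_mul_second_deriv_le_of_isLocalMax hθ hθ' (first g hg) (second g hg)
    (first G hG) (second G hG) (by simpa using hG0) (by simpa using hGg) hmax'
  simpa using this

/-- If `v ≤ V` fails, then at a positive maximum of `e ^ (-K t) * (v ^ θ - V ^ θ)` the first and
second order conditions hold. -/
theorem exists_contact_point {d : ℕ} {T : ℝ} {D : Set (EuclideanSpace ℝ (Fin d))}
    (hDopen : IsOpen D) (hDbdd : Bornology.IsBounded D) {θ K : ℝ} (hθ : 0 < θ) (hθ' : θ ≤ 1)
    {v vt V Vt : ℝ → EuclideanSpace ℝ (Fin d) → ℝ}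
    (hv_cont : ContinuousOn (fun pr : ℝ × EuclideanSpace ℝ (Fin d) => v pr.1 pr.2)
      (Icc 0 T ×ˢ closure D))
    (hv_nn : ∀ t ∈ Icc 0 T, ∀ x ∈ closure D, 0 ≤ v t x)
    (hv_t : ∀ t ∈ Ioc 0 T, ∀ x ∈ D, HasDerivAt (fun s => v s x) (vt t x) t)
    (hv_x : ∀ t ∈ Ioc 0 T, ContDiffOn ℝ 2 (v t) D)
    (hV_cont : ContinuousOn (fun pr : ℝ × EuclideanSpace ℝ (Fin d) => V pr.1 pr.2)
      (Icc 0 T ×ˢ closure D))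
    (hV_nn : ∀ t ∈ Icc 0 T, ∀ x ∈ closure D, 0 ≤ V t x)
    (hV_pos : ∀ t ∈ Ioc 0 T, ∀ x ∈ D, 0 < V t x)
    (hV_t : ∀ t ∈ Ioc 0 T, ∀ x ∈ D, HasDerivAt (fun s => V s x) (Vt t x) t)
    (hV_x : ∀ t ∈ Ioc 0 T, ContDiffOn ℝ 2 (V t) D)
    (h_bdry : ∀ t ∈ Ioc 0 T, ∀ x ∈ frontier D, v t x ≤ V t x)
    (h_init : ∀ x ∈ closure D, v 0 x ≤ V 0 x)
    (h : ¬ ∀ t ∈ Icc 0 T, ∀ x ∈ closure D, v t x ≤ V t x) :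
    ∃ t ∈ Ioc 0 T, ∃ x ∈ D, 0 < V t x ∧ V t x < v t x ∧
      (∀ y ∈ closure D, v t y ^ θ ≤ V t y ^ θ + (v t x ^ θ - V t x ^ θ)) ∧
      v t x ^ (θ - 1) * laplacian (v t) x ≤ V t x ^ (θ - 1) * laplacian (V t) x ∧
      K * (v t x ^ θ - V t x ^ θ)
        ≤ θ * (v t x ^ (θ - 1) * vt t x - V t x ^ (θ - 1) * Vt t x) := by
  push Not at h
  obtain ⟨t₁, ht₁, x₁, hx₁, hlt₁⟩ := h
  have hcpt : IsCompact (Icc (0 : ℝ) T ×ˢ closure D) :=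
    isCompact_Icc.prod hDbdd.isCompact_closure
  have hcont : ContinuousOn (fun pr : ℝ × EuclideanSpace ℝ (Fin d) =>
      exp (-K * pr.1) * (v pr.1 pr.2 ^ θ - V pr.1 pr.2 ^ θ)) (Icc 0 T ×ˢ closure D) :=
    ContinuousOn.mul (by fun_prop) ((hv_cont.rpow_const fun _ _ => Or.inr hθ.le).sub
      (hV_cont.rpow_const fun _ _ => Or.inr hθ.le))
  obtain ⟨⟨t, x⟩, ⟨ht, hx⟩, hmax⟩ := hcpt.exists_isMaxOn ⟨(t₁, x₁), ht₁, hx₁⟩ hcont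
  have hmax' : ∀ s ∈ Icc 0 T, ∀ y ∈ closure D,
      exp (-K * s) * (v s y ^ θ - V s y ^ θ) ≤ exp (-K * t) * (v t x ^ θ - V t x ^ θ) :=
    fun s hs y hy => hmax (show (s, y) ∈ Icc (0 : ℝ) T ×ˢ closure D from ⟨hs, hy⟩)
  have hpos : 0 < exp (-K * t) * (v t x ^ θ - V t x ^ θ) :=
    lt_of_lt_of_le (mul_pos (exp_pos _)
      (sub_pos.2 (rpow_lt_rpow (hV_nn t₁ ht₁ x₁ hx₁) hlt₁ hθ))) (hmax' t₁ ht₁ x₁ hx₁)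
  have hlt : V t x < v t x := by
    by_contra! hle
    have := rpow_le_rpow (hv_nn t ht x hx) hle hθ.le
    have := pos_of_mul_pos_right hpos (exp_pos _).le
    linarith
  have ht0 : t ∈ Ioc 0 T := by
    refine ⟨lt_of_le_of_ne ht.1 ?_, ht.2⟩
    rintro rfl
    exact absurd (h_init x hx) hlt.not_ge
  have hxD : x ∈ D := by
    by_contra hxD
    exact absurd (h_bdry t ht0 x ⟨hx, by rwa [hDopen.interior_eq]⟩) hlt.not_ge
  have hV0 := hV_pos t ht0 x hxD
  have hslice : ∀ y ∈ closure D, v t y ^ θ - V t y ^ θ ≤ v t x ^ θ - V t x ^ θ := fun y hy =>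
    le_of_mul_le_mul_left (hmax' t ht y hy) (exp_pos _)
  refine ⟨t, ht0, x, hxD, hV0, hlt, fun y hy => by linarith [hslice y hy], ?_, ?_⟩
  · refine rpow_mul_laplacian_le_of_isLocalMax hDopen hθ hθ' hxD (hv_x t ht0) (hV_x t ht0)
      hV0 hlt ?_
    filter_upwards [hDopen.mem_nhds hxD] with y hy using hslice y (subset_closure hy)
  · have hexp : HasDerivAt (fun s => exp (-K * s)) (exp (-K * t) * (-K)) t := by
      simpa using ((hasDerivAt_id t).const_mul (-K)).exp
    have hder := hexp.mul (((hv_t t ht0 x hxD).rpow_const (p := θ)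
      (Or.inl (hV0.trans hlt).ne')).sub ((hV_t t ht0 x hxD).rpow_const (p := θ)
      (Or.inl hV0.ne')))
    have hnn := deriv_nonneg_of_isMax_left ht0.1 hder fun s hs =>
      hmax' s ⟨hs.1.le, hs.2.trans ht.2⟩ x hx
    have e : 0 ≤ exp (-K * t) * (θ * (v t x ^ (θ - 1) * vt t x - V t x ^ (θ - 1) * Vt t x)
        - K * (v t x ^ θ - V t x ^ θ)) := by
      refine hnn.trans_eq ?_
      simp only [Pi.sub_apply]
      ring
    have := nonneg_of_mul_nonneg_right e (exp_pos _)
    linarith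

theorem setIntegral_rpow_le_add {E : Type*} [NormedAddCommGroup E] [NormedSpace ℝ E]
    [FiniteDimensional ℝ E] [MeasureSpace E] [BorelSpace E]
    [IsFiniteMeasureOnCompacts (volume : Measure E)] {D : Set E} (hDopen : IsOpen D)
    (hDbdd : Bornology.IsBounded D) {r c : ℝ} (hr : 0 ≤ r) {g G : E → ℝ}
    (hg : ContinuousOn g (closure D)) (hG : ContinuousOn G (closure D))
    (h : ∀ y ∈ closure D, g y ^ r ≤ G y ^ r + c) :
    ∫ y in D, g y ^ r ≤ (∫ y in D, G y ^ r) + volume.real D * c := by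
  have h_int : ∀ u : E → ℝ, ContinuousOn u (closure D) → IntegrableOn (fun y => u y ^ r) D :=
    fun u hu => ((hu.rpow_const fun _ _ => Or.inr hr).integrableOn_compact
      hDbdd.isCompact_closure).mono_set subset_closure
  have hfin : volume D ≠ ⊤ :=
    ((measure_mono subset_closure).trans_lt hDbdd.isCompact_closure.measure_lt_top).ne
  have hc : IntegrableOn (fun _ : E => c) D := integrableOn_const hfin
  calc ∫ y in D, g y ^ r ≤ ∫ y in D, (G y ^ r + c) :=
        setIntegral_mono_on (h_int g hg) ((h_int G hG).add hc) hDopen.measurableSet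
          fun y hy => h y (subset_closure hy)
    _ = (∫ y in D, G y ^ r) + volume.real D * c := by
        rw [integral_add (h_int G hG) hc]
        simp

theorem setIntegral_rpow_pos {E : Type*} [NormedAddCommGroup E] [NormedSpace ℝ E]
    [FiniteDimensional ℝ E] [MeasureSpace E] [BorelSpace E]
    [IsFiniteMeasureOnCompacts (volume : Measure E)] [(volume : Measure E).IsOpenPosMeasure]
    {D : Set E} (hDopen : IsOpen D)
    (hDbdd : Bornology.IsBounded D) {r : ℝ} (hr : 0 ≤ r) {g : E → ℝ}
    (hg : ContinuousOn g (closure D)) (hg_nn : ∀ y ∈ closure D, 0 ≤ g y)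
    {x : E} (hx : x ∈ D) (hgx : 0 < g x) : 0 < ∫ y in D, g y ^ r := by
  have h_int : IntegrableOn (fun y => g y ^ r) D :=
    ((hg.rpow_const fun _ _ => Or.inr hr).integrableOn_compact
      hDbdd.isCompact_closure).mono_set subset_closure
  rw [setIntegral_pos_iff_support_of_nonneg_ae ?_ h_int]
  · have hopen : IsOpen (D ∩ g ⁻¹' Ioi 0) :=
      (hg.mono subset_closure).isOpen_inter_preimage hDopen isOpen_Ioi
    refine (hopen.measure_pos volume ⟨x, hx, hgx⟩).trans_le (measure_mono ?_)
    exact fun y hy => ⟨(rpow_pos_of_pos hy.2 r).ne', hy.1⟩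
  · refine (ae_restrict_iff' hDopen.measurableSet).2 (Filter.Eventually.of_forall fun y hy => ?_)
    exact rpow_nonneg (hg_nn y (subset_closure hy)) r

/-- Difference of the reaction terms, after multiplication by `u ^ (θ - 1)`, at a point where
`B < A` and where `A ^ θ - B ^ θ` controls the difference of the integral terms. -/
theorem reaction_gap_le {θ A B R γ E₁ E₂ E₃ Iq Jq In Jn Cq Cn Cm C₁ C₂ K₀ s p m : ℝ}
    (hθ : 0 < θ) (hθ' : θ < 1) (hB : 0 < B) (hBA : B < A) (hAR : A ≤ R) (hp : 1 < p)
    (hm : 0 ≤ m) (hE₁ : 0 ≤ E₁) (hE₂ : 0 ≤ E₂) (hE₃ : 0 ≤ E₃) (hJn : 0 ≤ Jn) (hCn : 0 ≤ Cn)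
    (hCm : 0 ≤ Cm) (hIq : Iq ≤ Jq + Cq * (A ^ θ - B ^ θ))
    (hIn : In ≤ Jn + Cn * (A ^ θ - B ^ θ)) (hs0 : 0 ≤ s)
    (hs : s ≤ E₁ * Jq)
    (hAm : A ^ (m + θ - 1) - B ^ (m + θ - 1) ≤ Cm * (A ^ θ - B ^ θ))
    (hC₁ : E₁ * Cq + E₃ * R ^ m * Cn ≤ C₁) (hC₂ : E₃ * Jn ≤ C₂)
    (hK₀ : C₁ * A ^ (θ - 1) ≤ (1 - θ) * s * A⁻¹ + K₀) :
    A ^ (θ - 1) * (γ * A + E₁ * Iq - E₂ * A ^ p + E₃ * A ^ m * In)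
      - B ^ (θ - 1) * (γ * B + E₁ * Jq - E₂ * B ^ p + E₃ * B ^ m * Jn)
      ≤ (γ + K₀ + C₂ * Cm) * (A ^ θ - B ^ θ) := by
  have hA : 0 < A := hB.trans hBA
  have pow_one : ∀ u : ℝ, 0 < u → u ^ (θ - 1) * u = u ^ θ := fun u hu => by
    rw [← rpow_add_one hu.ne']; congr 1; ring
  have pow_add : ∀ u r : ℝ, 0 < u → u ^ (θ - 1) * u ^ r = u ^ (r + θ - 1) := fun u r hu => by
    rw [← rpow_add hu]; congr 1; ring
  have hμ : 0 < A ^ θ - B ^ θ := sub_pos.2 (rpow_lt_rpow hB.le hBA hθ)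
  have hgap := rpow_sub_one_gap hθ' hB hBA
  have ha : 0 < A ^ (θ - 1) := rpow_pos_of_pos hA _
  have hgap0 : 0 ≤ B ^ (θ - 1) - A ^ (θ - 1) :=
    (mul_nonneg (mul_nonneg (by linarith) (inv_pos.2 hA).le) hμ.le).trans hgap
  have hpA := pow_add A p hA
  have hpB := pow_add B p hB
  have hmA := pow_add A m hA
  have hmB := pow_add B m hB
  have h1A := pow_one A hA
  have h1B := pow_one B hB
  have hpow : B ^ (p + θ - 1) ≤ A ^ (p + θ - 1) := rpow_le_rpow hB.le hBA.le (by linarith)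
  have hARm : A ^ m ≤ R ^ m := rpow_le_rpow hA.le hAR hm
  set μ := A ^ θ - B ^ θ with hμdef
  set a := A ^ (θ - 1)
  set b := B ^ (θ - 1)
  have absorption : 0 ≤ E₂ * (a * A ^ p - b * B ^ p) := by
    rw [hpA, hpB]; exact mul_nonneg hE₂ (by linarith)
  have source : a * (E₁ * Iq) - b * (E₁ * Jq)
      ≤ a * μ * (E₁ * Cq) - (1 - θ) * s * A⁻¹ * μ := by
    have h1 : a * (E₁ * Iq) ≤ a * (E₁ * (Jq + Cq * μ)) := by gcongr
    have h2 : (b - a) * s ≤ (b - a) * (E₁ * Jq) := by gcongr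
    have h3 := mul_le_mul_of_nonneg_right hgap hs0
    linarith
  have coupling : a * (E₃ * A ^ m * In) - b * (E₃ * B ^ m * Jn)
      ≤ a * μ * (E₃ * R ^ m * Cn) + C₂ * Cm * μ := by
    have h1 : a * (E₃ * A ^ m * In) ≤ a * (E₃ * A ^ m * (Jn + Cn * μ)) := by gcongr
    have h2 : a * (E₃ * A ^ m * (Cn * μ)) ≤ a * (E₃ * R ^ m * (Cn * μ)) := by gcongr
    have h3 : E₃ * Jn * (a * A ^ m - b * B ^ m) ≤ E₃ * Jn * (Cm * μ) := by
      rw [hmA, hmB]; gcongr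
    have h4 : E₃ * Jn * (Cm * μ) ≤ C₂ * (Cm * μ) := by gcongr
    linarith
  have h5 : a * μ * (E₁ * Cq + E₃ * R ^ m * Cn) ≤ a * μ * C₁ := by gcongr
  have h6 : C₁ * a * μ ≤ ((1 - θ) * s * A⁻¹ + K₀) * μ := by gcongr
  have h7 : γ * (a * A) - γ * (b * B) = γ * μ := by rw [h1A, h1B, hμdef]; ring
  linarith

theorem exists_rpow_sub_le {θ m R : ℝ} (hθ : 0 < θ) (h : m + θ - 1 ≤ 0 ∨ 1 ≤ m) (hR : 0 ≤ R) :
    ∃ C, 0 ≤ C ∧ ∀ A B : ℝ, 0 < B → B < A → A ≤ R →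
      A ^ (m + θ - 1) - B ^ (m + θ - 1) ≤ C * (A ^ θ - B ^ θ) := by
  rcases h with h | h
  · refine ⟨0, le_rfl, fun A B hB hBA _ => ?_⟩
    have := rpow_le_rpow_of_nonpos hB hBA.le h
    linarith
  · refine ⟨(m + θ - 1) / θ * R ^ (m + θ - 1 - θ),
      mul_nonneg (div_nonneg (by linarith) hθ.le) (rpow_nonneg hR _), fun A B hB hBA hAR => ?_⟩
    have := rpow_le_rpow_add_of_rpow_le hθ (r := m + θ - 1) (by linarith) (hB.trans hBA).le hB.le
      hAR (sub_nonneg.2 (rpow_le_rpow hB.le hBA.le hθ.le)) (by linarith)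
    linarith

theorem exists_exp_mul_le {β : ℝ → ℝ} {T : ℝ} (hβ : ContinuousOn β (Icc 0 T)) (c : ℝ) :
    ∃ M, 0 < M ∧ ∀ t ∈ Icc 0 T, exp (c * β t) ≤ M := by
  obtain ⟨M, hM⟩ := isCompact_Icc.exists_bound_of_continuousOn
    (continuous_exp.comp_continuousOn (hβ.const_smul c))
  refine ⟨max M 1, by positivity, fun t ht => ?_⟩
  have := hM t ht
  simp only [Function.comp_apply, norm_eq_abs, abs_exp] at this
  exact this.trans (le_max_left _ _)

/-- A solution of the transformed equation that vanishes initially vanishes identically. -/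
theorem solution_nonpos_of_init_nonpos {d : ℕ} {T : ℝ}
    {D : Set (EuclideanSpace ℝ (Fin d))} (hDopen : IsOpen D)
    (hDbdd : Bornology.IsBounded D)
    {β : ℝ → ℝ} (hβ : ContinuousOn β (Icc 0 T))
    {k γ δ η : ℝ} (hk : 0 < k) (hδ : 0 ≤ δ)
    {p q n m : ℝ} (hq : 1 < q) (hn : 1 < n) (hm : 0 ≤ m)
    {v vt : ℝ → EuclideanSpace ℝ (Fin d) → ℝ}
    (hv_cont : ContinuousOn (fun pr : ℝ × EuclideanSpace ℝ (Fin d) => v pr.1 pr.2)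
      (Icc 0 T ×ˢ closure D))
    (hv_nn : ∀ t ∈ Icc 0 T, ∀ x ∈ closure D, 0 ≤ v t x)
    (hv_t : ∀ t ∈ Ioc 0 T, ∀ x ∈ D, HasDerivAt (fun s => v s x) (vt t x) t)
    (hv_x : ∀ t ∈ Ioc 0 T, ContDiffOn ℝ 2 (v t) D)
    (hv_pde : ∀ t ∈ Ioc 0 T, ∀ x ∈ D,
      vt t x = laplacian (v t) x + γ * v t x
        + exp ((q - 1) * η * β t) * (∫ y in D, v t y ^ q)
        - k * exp ((p - 1) * η * β t) * v t x ^ p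
        + δ * exp ((m + n - 1) * η * β t) * v t x ^ m * (∫ y in D, v t y ^ n))
    (hv_bdry : ∀ t ∈ Ioc 0 T, ∀ x ∈ frontier D, v t x = 0)
    (hv_init : ∀ x ∈ closure D, v 0 x ≤ 0) :
    ∀ t ∈ Icc 0 T, ∀ x ∈ closure D, v t x ≤ 0 := by
  obtain ⟨M₁, hM₁0, hM₁⟩ := exists_exp_mul_le hβ ((q - 1) * η)
  obtain ⟨M₃, hM₃0, hM₃⟩ := exists_exp_mul_le hβ ((m + n - 1) * η)
  obtain ⟨R, hR⟩ := (isCompact_Icc.prod hDbdd.isCompact_closure).exists_bound_of_continuousOn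
    hv_cont
  set L := γ + M₁ * (volume.real D * R ^ (q - 1))
    + δ * M₃ * (volume.real D * R ^ (m + n - 1)) + 1 with hL
  have key : ∀ ε : ℝ, 0 < ε → ∀ t ∈ Icc 0 T, ∀ x ∈ closure D, v t x ≤ ε * exp (L * t) := by
    intro ε hε
    by_contra hcon
    obtain ⟨t, ht, x, hx, hB, hBA, hslice, hlap, htime⟩ :=
      exists_contact_point (θ := 1) (K := L) (V := fun t _ => ε * exp (L * t))
        (Vt := fun t _ => L * (ε * exp (L * t))) hDopen hDbdd one_pos le_rfl hv_cont hv_nn hv_t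
        hv_x (by fun_prop) (fun _ _ _ _ => by positivity) (fun _ _ _ _ => by positivity)
        (fun t _ _ _ => by
          have := (((hasDerivAt_id t).const_mul L).exp).const_mul ε
          simp only [id, mul_one] at this
          exact this.congr_deriv (by ring))
        (fun _ _ => contDiffOn_const)
        (fun t ht x hx => by rw [hv_bdry t ht x hx]; positivity)
        (fun x hx => (hv_init x hx).trans (by positivity)) hcon
    have htI : t ∈ Icc 0 T := ⟨ht.1.le, ht.2⟩
    have hvc : ContinuousOn (v t) (closure D) :=
      hv_cont.comp (f := fun y => (t, y)) (by fun_prop) fun y hy => ⟨htI, hy⟩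
    set A := v t x with hAdef
    have hA : 0 < A := hB.trans hBA
    have hAR : A ≤ R := (le_abs_self _).trans (hR (t, x) ⟨htI, subset_closure hx⟩)
    have h_int : ∀ r : ℝ, 0 < r → ∫ y in D, v t y ^ r ≤ volume.real D * A ^ r := by
      intro r hr
      have := setIntegral_rpow_le_add hDopen hDbdd hr.le hvc (continuousOn_const (c := 0))
        (c := A ^ r) fun y hy => by
          have h1 := hslice y hy
          simp only [rpow_one] at h1
          simpa [zero_rpow hr.ne'] using
            rpow_le_rpow (hv_nn t htI y hy) (by linarith : v t y ≤ A) hr.le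
      simpa [zero_rpow hr.ne'] using this
    have h_int_nn : ∀ r : ℝ, 0 ≤ ∫ y in D, v t y ^ r := fun r =>
      setIntegral_nonneg hDopen.measurableSet fun y hy =>
        rpow_nonneg (hv_nn t htI y (subset_closure hy)) r
    have hlap0 : laplacian (v t) x ≤ 0 := by
      simpa [laplacian] using hlap
    have hpow : ∀ r : ℝ, 0 ≤ r → A ^ (r + 1) ≤ R ^ r * A := fun r hr => by
      rw [rpow_add_one hA.ne']
      gcongr
    have hQ : exp ((q - 1) * η * β t) * (∫ y in D, v t y ^ q)
        ≤ M₁ * (volume.real D * R ^ (q - 1)) * A := by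
      have h1 := hpow (q - 1) (by linarith)
      rw [sub_add_cancel] at h1
      calc _ ≤ M₁ * (volume.real D * (R ^ (q - 1) * A)) :=
            mul_le_mul (hM₁ t htI) ((h_int q (by linarith)).trans (by gcongr))
              (h_int_nn q) hM₁0.le
        _ = _ := by ring
    have hN : δ * exp ((m + n - 1) * η * β t) * A ^ m * (∫ y in D, v t y ^ n)
        ≤ δ * M₃ * (volume.real D * R ^ (m + n - 1)) * A := by
      have h1 := hpow (m + n - 1) (by linarith)
      rw [sub_add_cancel, rpow_add hA] at h1
      calc _ ≤ δ * M₃ * A ^ m * (volume.real D * A ^ n) := by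
            have h2 := h_int n (by linarith)
            have h3 := hM₃ t htI
            have h4 := h_int_nn n
            gcongr
        _ = δ * M₃ * volume.real D * (A ^ m * A ^ n) := by ring
        _ ≤ δ * M₃ * volume.real D * (R ^ (m + n - 1) * A) := by gcongr
        _ = _ := by ring
    have hP : 0 ≤ k * exp ((p - 1) * η * β t) * A ^ p := by positivity
    simp only [rpow_one, sub_self, rpow_zero, one_mul] at htime
    have hpde := hv_pde t ht x hx
    have hLA : L * A = γ * A + M₁ * (volume.real D * R ^ (q - 1)) * A
      + δ * M₃ * (volume.real D * R ^ (m + n - 1)) * A + A := by rw [hL]; ring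
    linarith
  intro t ht x hx
  by_contra! hpos
  have := key (v t x / 2 / exp (L * t)) (by positivity) t ht x hx
  rw [div_mul_cancel₀ _ (exp_pos _).ne'] at this
  linarith

/-- Comparison principle for the transformed random PDE (Proposition 3.1):
a supersolution `V` dominates the solution `v`. -/
theorem statement2 {d : ℕ} (hd : 1 ≤ d) {T : ℝ} (hT : 0 < T)
    {D : Set (EuclideanSpace ℝ (Fin d))} (hDopen : IsOpen D)
    (hDbdd : Bornology.IsBounded D)
    (β : ℝ → ℝ) (hβ : ContinuousOn β (Icc 0 T))
    {k γ δ η : ℝ} (hk : 0 < k) (hγ : 0 ≤ γ) (hδ : 0 ≤ δ) (hη : 0 ≤ η)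
    {p q n m : ℝ} (hp : 1 < p) (hq : 1 < q) (hn : 1 < n) (hm : 0 ≤ m)
    (f : EuclideanSpace ℝ (Fin d) → ℝ)
    (v vt V Vt : ℝ → EuclideanSpace ℝ (Fin d) → ℝ)
    -- `v` is continuous and nonnegative on `[0,T] × D̄`
    (hv_cont : ContinuousOn (fun pr : ℝ × EuclideanSpace ℝ (Fin d) => v pr.1 pr.2)
      (Icc 0 T ×ˢ closure D))
    (hv_nn : ∀ t ∈ Icc 0 T, ∀ x ∈ closure D, 0 ≤ v t x)
    -- the time derivative `∂v/∂t = vt` exists and is continuous on `(0,T] × D`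
    (hv_t : ∀ t ∈ Ioc 0 T, ∀ x ∈ D, HasDerivAt (fun s => v s x) (vt t x) t)
    (hvt_cont : ContinuousOn (fun pr : ℝ × EuclideanSpace ℝ (Fin d) => vt pr.1 pr.2)
      (Ioc 0 T ×ˢ D))
    (hv_x : ∀ t ∈ Ioc 0 T, ContDiffOn ℝ 2 (v t) D)
    -- `v` solves the transformed PDE on `(0,T] × D`
    (hv_pde : ∀ t ∈ Ioc 0 T, ∀ x ∈ D,
      vt t x = laplacian (v t) x + γ * v t x
        + exp ((q - 1) * η * β t) * (∫ y in D, v t y ^ q)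
        - k * exp ((p - 1) * η * β t) * v t x ^ p
        + δ * exp ((m + n - 1) * η * β t) * v t x ^ m * (∫ y in D, v t y ^ n))
    (hv_bdry : ∀ t ∈ Ioc 0 T, ∀ x ∈ frontier D, v t x = 0)
    (hv_init : ∀ x ∈ D, v 0 x = f x)
    -- `V` is continuous on `[0,T] × D̄` and strictly positive on `(0,T] × D`
    (hV_cont : ContinuousOn (fun pr : ℝ × EuclideanSpace ℝ (Fin d) => V pr.1 pr.2)
      (Icc 0 T ×ˢ closure D))
    (hV_pos : ∀ t ∈ Ioc 0 T, ∀ x ∈ D, 0 < V t x)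
    -- the time derivative `∂V/∂t = Vt` exists and is continuous on `(0,T] × D`
    (hV_t : ∀ t ∈ Ioc 0 T, ∀ x ∈ D, HasDerivAt (fun s => V s x) (Vt t x) t)
    (hVt_cont : ContinuousOn (fun pr : ℝ × EuclideanSpace ℝ (Fin d) => Vt pr.1 pr.2)
      (Ioc 0 T ×ˢ D))
    (hV_x : ∀ t ∈ Ioc 0 T, ContDiffOn ℝ 2 (V t) D)
    -- `V` is a supersolution of the transformed PDE on `(0,T] × D`
    (hV_pde : ∀ t ∈ Ioc 0 T, ∀ x ∈ D,
      laplacian (V t) x + γ * V t x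
        + exp ((q - 1) * η * β t) * (∫ y in D, V t y ^ q)
        - k * exp ((p - 1) * η * β t) * V t x ^ p
        + δ * exp ((m + n - 1) * η * β t) * V t x ^ m * (∫ y in D, V t y ^ n) ≤ Vt t x)
    (hV_bdry : ∀ t ∈ Ioc 0 T, ∀ x ∈ frontier D, 0 ≤ V t x)
    (hV_init : ∀ x ∈ D, f x ≤ V 0 x) :
    ∀ t ∈ Icc 0 T, ∀ x ∈ closure D, v t x ≤ V t x := by
  have hT0 : (0 : ℝ) ∈ Icc 0 T := ⟨le_rfl, hT.le⟩
  have hslice_cont : ∀ u : ℝ → EuclideanSpace ℝ (Fin d) → ℝ,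
      ContinuousOn (fun pr : ℝ × EuclideanSpace ℝ (Fin d) => u pr.1 pr.2)
        (Icc 0 T ×ˢ closure D) → ∀ t ∈ Icc 0 T, ContinuousOn (u t) (closure D) :=
    fun u hu t ht => hu.comp (f := fun y => (t, y)) (by fun_prop) fun y hy => ⟨ht, hy⟩
  have h_init : ∀ x ∈ closure D, v 0 x ≤ V 0 x := fun x hx =>
    ContinuousWithinAt.closure_le hx
      ((hslice_cont v hv_cont 0 hT0 x hx).mono subset_closure)
      ((hslice_cont V hV_cont 0 hT0 x hx).mono subset_closure)
      fun y hy => (hv_init y hy).trans_le (hV_init y hy)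
  have hV_nn : ∀ t ∈ Icc 0 T, ∀ x ∈ closure D, 0 ≤ V t x := by
    intro t ht x hx
    rcases ht.1.eq_or_lt with rfl | ht0
    · exact (hv_nn 0 ht x hx).trans (h_init x hx)
    by_cases hxD : x ∈ D
    · exact (hV_pos t ⟨ht0, ht.2⟩ x hxD).le
    · exact hV_bdry t ⟨ht0, ht.2⟩ x ⟨hx, by rwa [hDopen.interior_eq]⟩
  by_cases hzero : ∀ x ∈ D, V 0 x ≤ 0
  · have hv0 : ∀ x ∈ closure D, v 0 x ≤ 0 := fun x hx =>
      ContinuousWithinAt.closure_le hx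
        ((hslice_cont v hv_cont 0 hT0 x hx).mono subset_closure) continuousWithinAt_const
        fun y hy => (h_init y (subset_closure hy)).trans (hzero y hy)
    intro t ht x hx
    exact (solution_nonpos_of_init_nonpos hDopen hDbdd hβ hk hδ hq hn hm hv_cont hv_nn
      hv_t hv_x hv_pde hv_bdry hv0 t ht x hx).trans (hV_nn t ht x hx)
  push Not at hzero
  obtain ⟨x₀, hx₀, hVx₀⟩ := hzero
  obtain ⟨θ, hθ, hθ', hθm⟩ : ∃ θ : ℝ, 0 < θ ∧ θ < 1 ∧ (m + θ - 1 ≤ 0 ∨ 1 ≤ m) := by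
    rcases lt_or_ge m 1 with h | h
    · exact ⟨(1 - m) / 2, by linarith, by linarith, Or.inl (by linarith)⟩
    · exact ⟨1 / 2, by norm_num, by norm_num, Or.inr h⟩
  have hcpt : IsCompact (Icc (0 : ℝ) T ×ˢ closure D) :=
    isCompact_Icc.prod hDbdd.isCompact_closure
  obtain ⟨R, hR⟩ := hcpt.exists_bound_of_continuousOn hv_cont
  have hvR : ∀ t ∈ Icc 0 T, ∀ x ∈ closure D, v t x ≤ R := fun t ht x hx =>
    (le_abs_self _).trans (hR (t, x) ⟨ht, hx⟩)
  have hR0 : 0 ≤ R := (hv_nn 0 hT0 x₀ (subset_closure hx₀)).trans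
    (hvR 0 hT0 x₀ (subset_closure hx₀))
  obtain ⟨M₁, hM₁0, hM₁⟩ := exists_exp_mul_le hβ ((q - 1) * η)
  obtain ⟨M₃, hM₃0, hM₃⟩ := exists_exp_mul_le hβ ((m + n - 1) * η)
  obtain ⟨Cm, hCm0, hCm⟩ := exists_rpow_sub_le hθ hθm hR0
  have hexp_cont : ∀ c : ℝ, ContinuousOn (fun t => exp (c * β t)) (Icc 0 T) := fun c =>
    continuous_exp.comp_continuousOn (hβ.const_smul c)
  -- the source generated by `V` is bounded away from zero
  obtain ⟨s, hs0, hs⟩ : ∃ s : ℝ, 0 < s ∧ ∀ t ∈ Icc 0 T,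
      s ≤ exp ((q - 1) * η * β t) * ∫ y in D, V t y ^ q := by
    obtain ⟨t₀, ht₀, hmin⟩ := isCompact_Icc.exists_isMinOn ⟨0, hT0⟩
      ((hexp_cont ((q - 1) * η)).mul
        (continuousOn_setIntegral_rpow hDopen hDbdd (by linarith : 0 ≤ q) hV_cont))
    refine ⟨_, mul_pos (exp_pos _) ?_, fun t ht => hmin ht⟩
    refine setIntegral_rpow_pos hDopen hDbdd (by linarith) (hslice_cont V hV_cont t₀ ht₀)
      (hV_nn t₀ ht₀) hx₀ ?_
    rcases ht₀.1.eq_or_lt with h | h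
    · rwa [← h]
    · exact hV_pos t₀ ⟨h, ht₀.2⟩ x₀ hx₀
  obtain ⟨C₂, hC₂⟩ := isCompact_Icc.exists_bound_of_continuousOn
    (((hexp_cont ((m + n - 1) * η)).const_smul δ).mul
      (continuousOn_setIntegral_rpow hDopen hDbdd (by linarith : 0 ≤ n) hV_cont))
  set Cq := volume.real D * (q / θ * R ^ (q - θ)) with hCq
  set Cn := volume.real D * (n / θ * R ^ (n - θ)) with hCn
  have hCq0 : 0 ≤ Cq := by positivity
  have hCn0 : 0 ≤ Cn := by positivity
  set C₁ := M₁ * Cq + δ * M₃ * R ^ m * Cn + 1 with hC₁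
  have hC₁0 : 0 < C₁ := by positivity
  obtain ⟨K₀, hK₀0, hK₀⟩ := exists_mul_rpow_sub_one_le hθ hθ'
    (mul_pos (sub_pos.2 hθ') hs0) hC₁0
  have hC₂0 : 0 ≤ C₂ := (norm_nonneg _).trans (hC₂ 0 hT0)
  by_contra hcon
  obtain ⟨t, ht, x, hx, hB, hBA, hslice, hlap, htime⟩ :=
    exists_contact_point (K := γ + K₀ + C₂ * Cm + 1) hDopen hDbdd hθ hθ'.le hv_cont hv_nn hv_t
      hv_x hV_cont hV_nn hV_pos hV_t hV_x
      (fun t ht x hx => (hv_bdry t ht x hx).trans_le (hV_bdry t ht x hx)) h_init hcon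
  have htI : t ∈ Icc 0 T := ⟨ht.1.le, ht.2⟩
  have hμ : 0 < v t x ^ θ - V t x ^ θ := sub_pos.2 (rpow_lt_rpow hB.le hBA hθ)
  have h_int : ∀ r : ℝ, 1 < r → ∫ y in D, v t y ^ r ≤ (∫ y in D, V t y ^ r)
      + volume.real D * (r / θ * R ^ (r - θ)) * (v t x ^ θ - V t x ^ θ) := by
    intro r hr
    rw [mul_assoc]
    exact setIntegral_rpow_le_add hDopen hDbdd (by linarith) (hslice_cont v hv_cont t htI)
      (hslice_cont V hV_cont t htI) fun y hy =>
        rpow_le_rpow_add_of_rpow_le hθ (by linarith) (hv_nn t htI y hy) (hV_nn t htI y hy)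
          (hvR t htI y hy) hμ.le (hslice y hy)
  have hgap := reaction_gap_le (γ := γ) (E₁ := exp ((q - 1) * η * β t))
    (E₂ := k * exp ((p - 1) * η * β t)) (E₃ := δ * exp ((m + n - 1) * η * β t))
    hθ hθ' hB hBA (hvR t htI x (subset_closure hx)) hp hm (exp_pos _).le (by positivity)
    (by positivity)
    (setIntegral_nonneg hDopen.measurableSet fun y hy =>
      rpow_nonneg (hV_nn t htI y (subset_closure hy)) n)
    hCn0 hCm0 (h_int q hq) (h_int n hn) hs0.le (hs t htI)
    (hCm _ _ hB hBA (hvR t htI x (subset_closure hx)))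
    (by
      have h1 := mul_le_mul_of_nonneg_right (hM₁ t htI) hCq0
      have h3 : δ * exp ((m + n - 1) * η * β t) * R ^ m * Cn ≤ δ * M₃ * R ^ m * Cn := by
        have := hM₃ t htI
        gcongr
      rw [hC₁]
      linarith)
    ((le_abs_self _).trans (hC₂ t htI)) (hK₀ _ (hB.trans hBA))
  have hsuper := mul_le_mul_of_nonneg_left (hV_pde t ht x hx)
    (rpow_nonneg hB.le (θ - 1))
  have hpde := hv_pde t ht x hx
  have hdiff : v t x ^ (θ - 1) * vt t x - V t x ^ (θ - 1) * Vt t x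
      ≤ (γ + K₀ + C₂ * Cm) * (v t x ^ θ - V t x ^ θ) := by
    rw [hpde]
    linarith
  have hK0 : 0 < (γ + K₀ + C₂ * Cm + 1) * (v t x ^ θ - V t x ^ θ) := by positivity
  have hfin : θ * (v t x ^ (θ - 1) * vt t x - V t x ^ (θ - 1) * Vt t x)
      ≤ θ * ((γ + K₀ + C₂ * Cm) * (v t x ^ θ - V t x ^ θ)) := by gcongr
  nlinarith
end

section
/- Let D ⊂ ℝ^d be a measurable set with Lebesgue measure |D| satisfying 0 < |D| < ∞, and let T > 0. Let k > 0, δ ≥ 0, η ≥ 0, γ ∈ ℝ, λ₁ > 0 be constants; let n > 1, let m satisfy m = 0 or m ≥ 1, and set μ = m + n; assume μ = q and q > p > 1. Let φ : D → [0,∞) be measurable with ∫_D φ(y) dy = 1 and with φ^{q/(q−p)}, φ^{n/(n−1)}, and φ^{p+1} integrable on D. Let β : [0,T] → ℝ be continuous with β*(T) = sup_{0≤s≤T}|β(s)|, and let b > 1 satisfy b^{q−p}·e^{−η(q−1)β*(T)} ≥ 2k·(∫_D φ^{q/(q−p)})^{(q−p)/p} / (∫_D φ^{p+1})^{(q−p)/p}.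 Let v : [0,T] × D → [0,∞) satisfy v(t,x) ≥ b·φ(x) for all (t,x), with v(t,·)^q, v(t,·)^n, v(t,·)^p·φ, v(t,·)^m·φ, v(t,·)·φ integrable on D for each t, and suppose J(t) := ∫_D v(t,x)·φ(x) dx is differentiable on [0,T] with J'(t) = (−λ₁+γ)·J(t) + e^{(μ−1)ηβ(t)}·∫_D v(t,y)^μ dy − k·e^{(p−1)ηβ(t)}·∫_D v(t,x)^p·φ(x) dx + δ·e^{(μ−1)ηβ(t)}·(∫_D v(t,z)^m·φ(z) dz)·(∫_D v(t,y)^n dy) for all t ∈ [0,T]. Set Ñ = (1/2)·(∫_D φ^{μ/(μ−p)})^{(p−μ)/p} + δ·(∫_D φ^{n/(n−1)})^{1−n}. Then for all t ∈ [0,T]: Ñ·(μ−1)·∫₀^t e^{η(μ−1)β(s) + (−λ₁+γ)(μ−1)s} ds < J(0)^{1−μ}. In particular T ≤ τ*₁ := inf{ t ≥ 0 : ∫₀^t e^{η(μ−1)β(s)+(−λ₁+γ)(μ−1)s} ds ≥ J(0)^{1−μ}/(Ñ(μ−1)) }. -/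
open MeasureTheory Real Set

/-- A function that is nonnegative almost everywhere is a.e. strongly measurable as soon as one of
its positive powers is. -/
theorem aestronglyMeasurable_of_rpow {α : Type*} [MeasurableSpace α] {ν : Measure α}
    {f : α → ℝ} {r : ℝ} (hr : r ≠ 0) (hf : 0 ≤ᵐ[ν] f)
    (h : AEStronglyMeasurable (fun x => f x ^ r) ν) : AEStronglyMeasurable f ν := by
  refine (h.aemeasurable.pow_const r⁻¹).aestronglyMeasurable.congr ?_
  filter_upwards [hf] with x hx
  exact rpow_rpow_inv hx hr

theorem memLp_of_integrable_rpow {α : Type*} [MeasurableSpace α] {ν : Measure α}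
    {f : α → ℝ} {r : ℝ} (hr : 0 < r) (hf : 0 ≤ᵐ[ν] f)
    (h : Integrable (fun x => f x ^ r) ν) : MemLp f (ENNReal.ofReal r) ν := by
  have hm := aestronglyMeasurable_of_rpow hr.ne' hf h.1
  refine (integrable_norm_rpow_iff hm (by simpa using hr) ENNReal.ofReal_ne_top).1 ?_
  refine h.congr ?_
  filter_upwards [hf] with x hx
  rw [ENNReal.toReal_ofReal hr.le, norm_of_nonneg hx]

/-- Hölder's inequality in the form of a lower bound for `∫ f ^ r`. -/
theorem rpow_integral_mul_le_of_holder {α : Type*} [MeasurableSpace α] {ν : Measure α}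
    {f g : α → ℝ} {r : ℝ} (hr : 1 < r) (hf : 0 ≤ᵐ[ν] f) (hg : 0 ≤ᵐ[ν] g)
    (hfi : Integrable (fun x => f x ^ r) ν) (hgi : Integrable (fun x => g x ^ (r / (r - 1))) ν) :
    (∫ x, f x * g x ∂ν) ^ r ≤ (∫ x, f x ^ r ∂ν) * (∫ x, g x ^ (r / (r - 1)) ∂ν) ^ (r - 1) := by
  have hr0 : 0 < r := by linarith
  have hr1 : 0 < r - 1 := by linarith
  have hc : r.HolderConjugate (r / (r - 1)) := Real.HolderConjugate.conjExponent hr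
  have h := integral_mul_le_Lp_mul_Lq_of_nonneg hc hf hg
    (memLp_of_integrable_rpow hr0 hf hfi) (memLp_of_integrable_rpow (by positivity) hg hgi)
  have hF : 0 ≤ ∫ x, f x ^ r ∂ν := integral_nonneg_of_ae <| by
    filter_upwards [hf] with x hx using rpow_nonneg hx _
  have hG : 0 ≤ ∫ x, g x ^ (r / (r - 1)) ∂ν := integral_nonneg_of_ae <| by
    filter_upwards [hg] with x hx using rpow_nonneg hx _
  have hfg : 0 ≤ ∫ x, f x * g x ∂ν := integral_nonneg_of_ae <| by
    filter_upwards [hf, hg] with x hx hy using mul_nonneg hx hy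
  refine (rpow_le_rpow hfg h hr0.le).trans_eq ?_
  rw [mul_rpow (rpow_nonneg hF _) (rpow_nonneg hG _), ← rpow_mul hF, ← rpow_mul hG]
  congr 2
  · rw [one_div_mul_cancel hr0.ne', rpow_one]
  · field_simp

/-- Jensen's inequality for the power function and a probability density `w`. -/
theorem rpow_integral_mul_le_integral_rpow_mul {α : Type*} [MeasurableSpace α] {ν : Measure α}
    {f w : α → ℝ} {r : ℝ} (hr : 1 ≤ r) (hf : 0 ≤ᵐ[ν] f) (hw : 0 ≤ᵐ[ν] w)
    (hw1 : ∫ x, w x ∂ν = 1) (hfi : Integrable (fun x => f x ^ r * w x) ν) :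
    (∫ x, f x * w x ∂ν) ^ r ≤ ∫ x, f x ^ r * w x ∂ν := by
  rcases hr.eq_or_lt with rfl | hr
  · simp
  have hr0 : 0 < r := by linarith
  have hr1 : 0 < r - 1 := by linarith
  have hwi : Integrable w ν := by
    by_contra h
    simp [integral_undef h] at hw1
  have e1 : (fun x => (f x * w x ^ r⁻¹) ^ r) =ᵐ[ν] fun x => f x ^ r * w x := by
    filter_upwards [hf, hw] with x hx hy
    rw [mul_rpow hx (rpow_nonneg hy _), rpow_inv_rpow hy hr0.ne']
  have e2 : (fun x => (w x ^ ((r - 1) / r)) ^ (r / (r - 1))) =ᵐ[ν] w := by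
    filter_upwards [hw] with x hy
    rw [← rpow_mul hy, div_mul_div_cancel₀ hr0.ne', div_self hr1.ne', rpow_one]
  have e3 : (fun x => (f x * w x ^ r⁻¹) * w x ^ ((r - 1) / r)) =ᵐ[ν] fun x => f x * w x := by
    filter_upwards [hw] with x hy
    rw [mul_assoc, ← rpow_add_of_nonneg hy (by positivity) (by positivity)]
    have : r⁻¹ + (r - 1) / r = 1 := by field_simp; ring
    rw [this, rpow_one]
  have h := rpow_integral_mul_le_of_holder (ν := ν) (f := fun x => f x * w x ^ r⁻¹)
    (g := fun x => w x ^ ((r - 1) / r)) hr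
    (by filter_upwards [hf, hw] with x hx hy using mul_nonneg hx (rpow_nonneg hy _))
    (by filter_upwards [hw] with x hy using rpow_nonneg hy _)
    (hfi.congr e1.symm) (hwi.congr e2.symm)
  rwa [integral_congr_ae e1, integral_congr_ae e2, integral_congr_ae e3, hw1, one_rpow,
    mul_one] at h

/-- If `w` has nonzero integral, a nonnegative integrable function which vanishes only where `w`
does has positive integral. -/
theorem integral_pos_of_eq_zero_imp {α : Type*} [MeasurableSpace α] {ν : Measure α}
    {f w : α → ℝ} (hf : 0 ≤ᵐ[ν] f) (hfi : Integrable f ν) (hw : ∫ x, w x ∂ν ≠ 0)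
    (h : ∀ᵐ x ∂ν, f x = 0 → w x = 0) : 0 < ∫ x, f x ∂ν := by
  refine (integral_nonneg_of_ae hf).lt_of_ne fun h0 => hw ?_
  refine integral_eq_zero_of_ae ?_
  filter_upwards [(integral_eq_zero_iff_of_nonneg_ae hf hfi).1 h0.symm, h] with x hx himp
    using himp hx

/-- Bernoulli-type comparison: a positive solution of `J' ≥ c J + N e^g J ^ μ` on `[0, t]` forces
`N (μ - 1) ∫₀ᵗ e^{g s + c (μ - 1) s} ds` to stay below `J 0 ^ (1 - μ)`. -/
theorem mul_integral_exp_lt_of_bernoulli_le {J J' g : ℝ → ℝ} {c N μ t : ℝ} (hμ : 1 < μ)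
    (ht : 0 ≤ t) (hg : ContinuousOn g (Icc 0 t)) (hJ : ∀ s ∈ Icc 0 t, 0 < J s)
    (hJ' : ∀ s ∈ Icc 0 t, HasDerivAt J (J' s) s)
    (hle : ∀ s ∈ Icc 0 t, c * J s + N * exp (g s) * J s ^ μ ≤ J' s) :
    N * (μ - 1) * (∫ s in (0:ℝ)..t, exp (g s + c * (μ - 1) * s)) < J 0 ^ (1 - μ) := by
  set F : ℝ → ℝ := fun s => exp (c * (μ - 1) * s) * J s ^ (1 - μ)
  have hF : ∀ s ∈ Icc 0 t, HasDerivAt F (exp (c * (μ - 1) * s) * (c * (μ - 1)) * J s ^ (1 - μ)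
      + exp (c * (μ - 1) * s) * (J' s * (1 - μ) * J s ^ (1 - μ - 1))) s := by
    intro s hs
    have h1 : HasDerivAt (fun s => c * (μ - 1) * s) (c * (μ - 1)) s := by
      simpa using (hasDerivAt_id s).const_mul (c * (μ - 1))
    exact h1.exp.mul ((hJ' s hs).rpow_const (Or.inl (hJ s hs).ne'))
  have key := intervalIntegral.sub_le_integral_of_hasDeriv_right_of_le ht
    (φ := fun s => -(N * (μ - 1)) * exp (g s + c * (μ - 1) * s))
    (fun s hs => (hF s hs).continuousAt.continuousWithinAt)
    (fun s hs => (hF s (Ioo_subset_Icc_self hs)).hasDerivWithinAt)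
    (ContinuousOn.integrableOn_Icc (by fun_prop)) (fun s hs => by
      have hs' := Ioo_subset_Icc_self hs
      have hp := hJ s hs'
      have e1 : J s ^ (1 - μ) = J s * J s ^ (-μ) := by
        rw [← rpow_one_add' hp.le (by linarith)]; rfl
      have e2 : J s ^ (1 - μ - 1) = J s ^ (-μ) := by congr 1; ring
      have e3 : J s ^ μ * J s ^ (-μ) = 1 := by rw [← rpow_add hp]; simp
      have hpos : 0 ≤ exp (c * (μ - 1) * s) * J s ^ (-μ) * (μ - 1) :=
        mul_nonneg (by positivity) (by linarith)
      have := mul_le_mul_of_nonneg_left (hle s hs') hpos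
      rw [e1, e2, exp_add]
      linear_combination this - N * exp (g s) * exp (c * (μ - 1) * s) * (μ - 1) * e3)
  rw [intervalIntegral.integral_const_mul] at key
  have h0 : F 0 = J 0 ^ (1 - μ) := by simp [F]
  have hFt : 0 < F t := by
    have := hJ t ⟨ht, le_rfl⟩
    positivity
  linarith

/-- A power source `E ∫ f ^ q` dominates twice the absorption term `k e ∫ f ^ p w` as soon as `f` is
bounded below by a sufficiently large multiple of the density `w`. -/
theorem half_rpow_integral_le_source_sub_absorption {α : Type*} [MeasurableSpace α]
    {ν : Measure α} {f w : α → ℝ} {p q k b R E e : ℝ} (hp : 1 < p) (hpq : p < q) (hb : 0 < b)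
    (hE : 0 ≤ E) (he : 0 ≤ e) (hw : 0 ≤ᵐ[ν] w) (hlb : ∀ᵐ x ∂ν, b * w x ≤ f x)
    (hw1 : ∫ x, w x ∂ν = 1) (hA : Integrable (fun x => w x ^ (q / (q - p))) ν)
    (hC : Integrable (fun x => w x ^ (p + 1)) ν)
    (hfq : Integrable (fun x => f x ^ q) ν) (hfp : Integrable (fun x => f x ^ p * w x) ν)
    (hcond : 2 * k * (∫ x, w x ^ (q / (q - p)) ∂ν) ^ ((q - p) / p)
        / (∫ x, w x ^ (p + 1) ∂ν) ^ ((q - p) / p) ≤ b ^ (q - p) * R)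
    (hR : 0 ≤ R) (hRe : R * e ≤ E) :
    1 / 2 * (∫ x, w x ^ (q / (q - p)) ∂ν) ^ ((p - q) / p) * E * (∫ x, f x * w x ∂ν) ^ q
      ≤ E * (∫ x, f x ^ q ∂ν) - k * e * ∫ x, f x ^ p * w x ∂ν := by
  have hp0 : 0 < p := by linarith
  have hqp : 0 < q - p := by linarith
  have hq0 : 0 < q := by linarith
  have hf : 0 ≤ᵐ[ν] f := by
    filter_upwards [hw, hlb] with x hx hy using (mul_nonneg hb.le hx).trans hy
  have hwpos : ∀ r : ℝ, r ≠ 0 → Integrable (fun x => w x ^ r) ν → 0 < ∫ x, w x ^ r ∂ν := by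
    intro r hr hi
    refine integral_pos_of_eq_zero_imp (w := w) ?_ hi (by simp [hw1]) ?_
    · filter_upwards [hw] with x hx using rpow_nonneg hx _
    · filter_upwards [hw] with x hx using fun h => (rpow_eq_zero hx hr).1 h
  have hApos := hwpos _ (by positivity) hA
  have hCpos := hwpos _ (by positivity) hC
  have hJ0 : 0 ≤ ∫ x, f x * w x ∂ν := integral_nonneg_of_ae <| by
    filter_upwards [hf, hw] with x hx hy using mul_nonneg hx hy
  have hJW := rpow_integral_mul_le_integral_rpow_mul hp.le hf hw hw1 hfp
  have hCW : b ^ p * (∫ x, w x ^ (p + 1) ∂ν) ≤ ∫ x, f x ^ p * w x ∂ν := by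
    rw [← integral_const_mul]
    refine integral_mono_ae (hC.const_mul _) hfp ?_
    filter_upwards [hw, hlb] with x hx hy
    have : b ^ p * w x ^ (p + 1) = (b * w x) ^ p * w x := by
      rw [mul_rpow hb.le hx, rpow_add_one' hx (by positivity), mul_assoc]
    simp only [this]
    exact mul_le_mul_of_nonneg_right (rpow_le_rpow (mul_nonneg hb.le hx) hy hp0.le) hx
  have e1 : (fun x => (f x ^ p) ^ (q / p)) =ᵐ[ν] fun x => f x ^ q := by
    filter_upwards [hf] with x hx
    rw [← rpow_mul hx, mul_div_cancel₀ _ hp0.ne']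
  have e2 : q / p / (q / p - 1) = q / (q - p) := by field_simp
  have hXW := rpow_integral_mul_le_of_holder (ν := ν) (f := fun x => f x ^ p) (g := w) (r := q / p)
    ((one_lt_div hp0).2 hpq) (by filter_upwards [hf] with x hx using rpow_nonneg hx _) hw
    (hfq.congr e1.symm) (by rwa [e2])
  rw [integral_congr_ae e1, e2, show q / p - 1 = (q - p) / p by field_simp] at hXW
  set A := ∫ x, w x ^ (q / (q - p)) ∂ν
  set C := ∫ x, w x ^ (p + 1) ∂ν
  set W := ∫ x, f x ^ p * w x ∂ν
  set X := ∫ x, f x ^ q ∂ν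
  set I := ∫ x, f x * w x ∂ν
  have hWpos : 0 < W := lt_of_lt_of_le (by positivity) hCW
  have hIW : I ^ q ≤ W ^ (q / p) := by
    have := rpow_le_rpow (by positivity) hJW (div_pos hq0 hp0).le
    rwa [← rpow_mul hJ0, mul_div_cancel₀ _ hp0.ne'] at this
  have hWs : W ^ (q / p) = W * W ^ ((q - p) / p) := by
    rw [← rpow_one_add' hWpos.le (by positivity)]
    congr 1; field_simp; ring
  have hbC : b ^ (q - p) * C ^ ((q - p) / p) ≤ W ^ ((q - p) / p) := by
    have := rpow_le_rpow (by positivity) hCW (div_pos hqp hp0).le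
    rwa [mul_rpow (by positivity) hCpos.le, ← rpow_mul hb.le, mul_div_cancel₀ _ hp0.ne'] at this
  rw [div_le_iff₀ (by positivity)] at hcond
  rw [show (p - q) / p = -((q - p) / p) by ring, rpow_neg hApos.le]
  have hAθ : 0 < A ^ ((q - p) / p) := by positivity
  set a := A ^ ((q - p) / p)
  have h1 : 2 * k * a ≤ W ^ ((q - p) / p) * R := by nlinarith
  have h2 : 2 * k * a * (e * W) ≤ W ^ (q / p) * E := by
    calc 2 * k * a * (e * W) ≤ W ^ ((q - p) / p) * R * (e * W) := by gcongr
      _ = W ^ (q / p) * (R * e) := by rw [hWs]; ring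
      _ ≤ W ^ (q / p) * E := by gcongr
  have h3 : E * W ^ (q / p) ≤ E * (X * a) := by gcongr
  have h4 : E * I ^ q ≤ E * W ^ (q / p) := by gcongr
  rw [show 1 / 2 * a⁻¹ * E * I ^ q = (1 / 2 * E * I ^ q) / a by field_simp, div_le_iff₀ hAθ]
  linarith

/-- Pathwise upper bound for the blow-up time in the case `m + n = q`
(Theorem 5.1, case 1): on any interval `[0,T]` on which the solution exists, the
functional `J(t) = ∫_D v(t,x)φ(x)dx` satisfies
`Ñ(μ−1)∫₀^t e^{η(μ−1)β(s)+(−λ₁+γ)(μ−1)s} ds < J(0)^{1−μ}`; in particular `T ≤ τ*₁`. -/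
theorem statement11 {d : ℕ} (D : Set (EuclideanSpace ℝ (Fin d)))
    (hDmeas : MeasurableSet D) (hD0 : 0 < volume D) (hDfin : volume D < ⊤)
    (T : ℝ) (hT : 0 < T)
    (k δ η γ lam1 : ℝ) (hk : 0 < k) (hδ : 0 ≤ δ) (hη : 0 ≤ η) (hlam : 0 < lam1)
    (p q n m μ : ℝ) (hn : 1 < n) (hm : m = 0 ∨ 1 ≤ m)
    (hμ : μ = m + n) (hμq : μ = q) (hp : 1 < p) (hpq : p < q)
    (φ : EuclideanSpace ℝ (Fin d) → ℝ) (hφmeas : Measurable φ)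
    (hφnn : ∀ x ∈ D, 0 ≤ φ x)
    (hφ_int : (∫ y in D, φ y) = 1)
    (hφ1 : IntegrableOn (fun y => φ y ^ (q / (q - p))) D)
    (hφ2 : IntegrableOn (fun y => φ y ^ (n / (n - 1))) D)
    (hφ3 : IntegrableOn (fun y => φ y ^ (p + 1)) D)
    (β : ℝ → ℝ) (hβ : ContinuousOn β (Icc 0 T))
    (b : ℝ) (hb : 1 < b)
    -- the third condition of (B1), with `β*(T) = sup_{0≤s≤T}|β(s)|`
    (hcond : 2 * k * (∫ y in D, φ y ^ (q / (q - p))) ^ ((q - p) / p)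
        / (∫ y in D, φ y ^ (p + 1)) ^ ((q - p) / p)
      ≤ b ^ (q - p) * exp (-(η * (q - 1) * (⨆ s : Icc (0:ℝ) T, |β (s : ℝ)|))))
    (v : ℝ → EuclideanSpace ℝ (Fin d) → ℝ)
    (hv_nn : ∀ t ∈ Icc 0 T, ∀ x ∈ D, 0 ≤ v t x)
    (hv_lb : ∀ t ∈ Icc 0 T, ∀ x ∈ D, b * φ x ≤ v t x)
    (hv1 : ∀ t ∈ Icc 0 T, IntegrableOn (fun y => v t y ^ q) D)
    (hv2 : ∀ t ∈ Icc 0 T, IntegrableOn (fun y => v t y ^ n) D)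
    (hv3 : ∀ t ∈ Icc 0 T, IntegrableOn (fun x => v t x ^ p * φ x) D)
    (hv4 : ∀ t ∈ Icc 0 T, IntegrableOn (fun x => v t x ^ m * φ x) D)
    (hv5 : ∀ t ∈ Icc 0 T, IntegrableOn (fun x => v t x * φ x) D)
    (J : ℝ → ℝ) (hJ : ∀ t ∈ Icc 0 T, J t = ∫ x in D, v t x * φ x)
    -- `J` is differentiable, with derivative given by the identity obtained from
    -- the transformed PDE via `−Δφ = λ₁φ`, `∫_D φ = 1` and integration by parts
    (hJ' : ∀ t ∈ Icc 0 T, HasDerivAt J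
      ((-lam1 + γ) * J t
        + exp ((μ - 1) * η * β t) * (∫ y in D, v t y ^ μ)
        - k * exp ((p - 1) * η * β t) * (∫ x in D, v t x ^ p * φ x)
        + δ * exp ((μ - 1) * η * β t) * (∫ z in D, v t z ^ m * φ z)
            * (∫ y in D, v t y ^ n)) t)
    (N : ℝ) (hN : N = (1 / 2) * (∫ x in D, φ x ^ (μ / (μ - p))) ^ ((p - μ) / p)
      + δ * (∫ x in D, φ x ^ (n / (n - 1))) ^ (1 - n)) :
    (∀ t ∈ Icc 0 T,
      N * (μ - 1) * (∫ s in (0:ℝ)..t,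
          exp (η * (μ - 1) * β s + (-lam1 + γ) * (μ - 1) * s))
        < J 0 ^ (1 - μ)) ∧
    -- `T ≤ τ*₁`
    (∀ t : ℝ, 0 ≤ t →
      J 0 ^ (1 - μ) / (N * (μ - 1)) ≤ ∫ s in (0:ℝ)..t,
          exp (η * (μ - 1) * β s + (-lam1 + γ) * (μ - 1) * s) →
      T ≤ t) := by
  have hq1 : 0 < q - 1 := by linarith
  have hν : ∀ {P : EuclideanSpace ℝ (Fin d) → Prop}, (∀ x ∈ D, P x) →
      ∀ᵐ x ∂volume.restrict D, P x :=
    fun h => (ae_restrict_iff' hDmeas).2 (Filter.Eventually.of_forall h)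
  have hφae : 0 ≤ᵐ[volume.restrict D] φ := hν hφnn
  have hφpos : ∀ r : ℝ, r ≠ 0 → IntegrableOn (fun y => φ y ^ r) D → 0 < ∫ y in D, φ y ^ r := by
    intro r hr hi
    exact integral_pos_of_eq_zero_imp (w := φ) (hν fun x hx => rpow_nonneg (hφnn x hx) _) hi
      (by simp [hφ_int]) (hν fun x hx h => (rpow_eq_zero (hφnn x hx) hr).1 h)
  have hA := hφpos _ (div_pos (by linarith) (by linarith)).ne' hφ1
  have hB := hφpos _ (div_pos (by linarith) (by linarith)).ne' hφ2
  have hJpos : ∀ t ∈ Icc 0 T, 0 < J t := by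
    intro t ht
    rw [hJ t ht]
    refine integral_pos_of_eq_zero_imp (w := φ)
      (hν fun x hx => mul_nonneg (hv_nn t ht x hx) (hφnn x hx)) (hv5 t ht) (by simp [hφ_int])
      (hν fun x hx h => ?_)
    rcases mul_eq_zero.1 h with h | h
    · have := hv_lb t ht x hx
      nlinarith [hφnn x hx]
    · exact h
  subst hμq
  have hNpos : 0 < N := by
    rw [hN]
    positivity
  have hbdd : BddAbove (range fun s : Icc (0:ℝ) T => |β s|) := by
    have := isCompact_Icc.bddAbove_image hβ.abs
    rwa [image_eq_range] at this
  have hmain : ∀ t ∈ Icc 0 T, N * (μ - 1) * (∫ s in (0:ℝ)..t,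
      exp (η * (μ - 1) * β s + (-lam1 + γ) * (μ - 1) * s)) < J 0 ^ (1 - μ) := by
    intro t ht
    have hsub : Icc 0 t ⊆ Icc 0 T := Icc_subset_Icc_right ht.2
    refine mul_integral_exp_lt_of_bernoulli_le (by linarith) ht.1 ((hβ.mono hsub).const_mul _)
      (fun s hs => hJpos s (hsub hs)) (fun s hs => hJ' s (hsub hs)) fun s hs => ?_
    replace hs := hsub hs
    have hvae : 0 ≤ᵐ[volume.restrict D] v s := hν (hv_nn s hs)
    have hβs := abs_le.1 (le_ciSup hbdd ⟨s, hs⟩)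
    have hsource := half_rpow_integral_le_source_sub_absorption (ν := volume.restrict D) (f := v s)
      (E := exp ((μ - 1) * η * β s)) (e := exp ((p - 1) * η * β s)) hp hpq (by linarith)
      (exp_nonneg _) (exp_nonneg _) hφae (hν (hv_lb s hs)) hφ_int hφ1 hφ3 (hv1 s hs) (hv3 s hs)
      hcond (exp_nonneg _) (by
        rw [← exp_add, exp_le_exp]
        have h1 : 0 ≤ η * (p - 1) := mul_nonneg hη (by linarith)
        have h2 : 0 ≤ η * (μ - p) := mul_nonneg hη (by linarith)
        nlinarith [abs_nonneg (β s), le_ciSup hbdd ⟨s, hs⟩])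
    have hJm : J s ^ m ≤ ∫ z in D, v s z ^ m * φ z := by
      rcases hm with rfl | hm
      · simp [hφ_int]
      · rw [hJ s hs]
        exact rpow_integral_mul_le_integral_rpow_mul hm hvae hφae hφ_int (hv4 s hs)
    have hJn : J s ^ n * (∫ x in D, φ x ^ (n / (n - 1))) ^ (1 - n) ≤ ∫ y in D, v s y ^ n := by
      have h := rpow_integral_mul_le_of_holder hn hvae hφae (hv2 s hs) hφ2
      rw [← hJ s hs] at h
      rw [show 1 - n = -(n - 1) by ring, rpow_neg hB.le, ← div_eq_mul_inv,
        div_le_iff₀ (by positivity)]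
      exact h
    have hJs := hJpos s hs
    have hnonlocal := mul_le_mul hJm hJn (by positivity) ((rpow_nonneg hJs.le m).trans hJm)
    have hδE : 0 ≤ δ * exp ((μ - 1) * η * β s) := by positivity
    have hnonlocal' := mul_le_mul_of_nonneg_left hnonlocal hδE
    have hJμ : J s ^ μ = J s ^ m * J s ^ n := by rw [hμ, rpow_add hJs]
    rw [← hJ s hs] at hsource
    rw [hN, show η * (μ - 1) * β s = (μ - 1) * η * β s by ring]
    rw [hJμ] at hsource ⊢
    linarith
  refine ⟨hmain, fun t ht h => ?_⟩
  by_contra! hlt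
  rw [div_le_iff₀ (mul_pos hNpos hq1)] at h
  linarith [hmain t ⟨ht, hlt.le⟩]
end

section
/- Let D ⊂ ℝ^d be a measurable set with Lebesgue measure |D| satisfying 0 < |D| < ∞, and let T > 0. Let k > 0, δ ≥ 0, η ≥ 0, γ ∈ ℝ, λ₁ > 0 be constants; let n > 1, let m satisfy m = 0 or m ≥ 1, and assume m + n > q > p > 1. Let φ : D → [0,∞) be measurable with ∫_D φ(y) dy = 1 and with φ^{q/(q−p)}, φ^{n/(n−1)}, and φ^{p+1} integrable on D. Let β : [0,T] → ℝ be continuous with β*(T) = sup_{0≤s≤T}|β(s)|, and let b > 1 satisfy b^{q−p}·e^{−η(q−1)β*(T)} ≥ 2k·(∫_D φ^{q/(q−p)})^{(q−p)/p} / (∫_D φ^{p+1})^{(q−p)/p}. Let v : [0,T] × D → [0,∞) satisfy v(t,x) ≥ b·φ(x) for all (t,x), with v(t,·)^q, v(t,·)^n, v(t,·)^p·φ, v(t,·)^m·φ, v(t,·)·φ integrable on D for each t, and suppose J(t) := ∫_D v(t,x)·φ(x) dx is differentiable on [0,T] with J(t) ≥ J(0) for all t and J'(t) = (−λ₁+γ)·J(t)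 + e^{(q−1)ηβ(t)}·∫_D v(t,y)^q dy − k·e^{(p−1)ηβ(t)}·∫_D v(t,x)^p·φ(x) dx + δ·e^{(m+n−1)ηβ(t)}·(∫_D v(t,z)^m·φ(z) dz)·(∫_D v(t,y)^n dy) for all t ∈ [0,T]. Set A₀ = ((m+n−q)/(m+n))·((m+n)/q)^{q/(m+n−q)}, let ε₀ > 0 satisfy ε₀ ≤ (J(0)^q/A₀)^{(m+n−q)/q}, and set C = (1/2)·(∫_D φ^{q/(q−p)})^{(p−q)/p} + δ·( ε₀ − A₀·ε₀^{(m+n)/(m+n−q)}/J(0)^q )·(∫_D φ^{n/(n−1)})^{1−n}. Then for all t ∈ [0,T]: (q−1)·C·∫₀^t min( e^{(q−1)ηβ(s)}, e^{(m+n−1)ηβ(s)} )·e^{(−λ₁+γ)(q−1)s} ds < J(0)^{1−q}. -/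
open MeasureTheory Real Set

/-- Hölder's inequality raised to the power `r`. -/
theorem integral_mul_rpow_le {α : Type*} [MeasurableSpace α] {μ : Measure α} {r : ℝ} (hr : 1 < r)
    {f g : α → ℝ} (hf : 0 ≤ᵐ[μ] f) (hg : 0 ≤ᵐ[μ] g) (hgm : AEStronglyMeasurable g μ)
    (hfr : Integrable (fun x => f x ^ r) μ) (hgr : Integrable (fun x => g x ^ (r / (r - 1))) μ) :
    (∫ x, f x * g x ∂μ) ^ r ≤ (∫ x, f x ^ r ∂μ) * (∫ x, g x ^ (r / (r - 1)) ∂μ) ^ (r - 1) := by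
  have hr0 : 0 < r := by linarith
  have hr1 : 0 < r - 1 := by linarith
  have hconj : r.HolderConjugate (r / (r - 1)) := Real.HolderConjugate.conjExponent hr
  have hfm : AEStronglyMeasurable f μ := by
    have h : AEStronglyMeasurable (fun x => (f x ^ r) ^ (1 / r)) μ :=
      (hfr.aestronglyMeasurable.aemeasurable.pow_const _).aestronglyMeasurable
    refine h.congr ?_
    filter_upwards [hf] with x hx
    rw [← rpow_mul hx, mul_one_div_cancel hr0.ne', rpow_one]
  have hmem : ∀ {h : α → ℝ} {s : ℝ}, 0 < s → 0 ≤ᵐ[μ] h → AEStronglyMeasurable h μ →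
      Integrable (fun x => h x ^ s) μ → MemLp h (ENNReal.ofReal s) μ := by
    intro h s hs h0 hm hi
    rw [← integrable_norm_rpow_iff hm (by simpa using hs) ENNReal.ofReal_ne_top,
      ENNReal.toReal_ofReal hs.le]
    refine hi.congr ?_
    filter_upwards [h0] with x hx
    rw [Real.norm_of_nonneg hx]
  have hF : 0 ≤ ∫ x, f x ^ r ∂μ := by
    refine integral_nonneg_of_ae ?_
    filter_upwards [hf] with x hx using rpow_nonneg hx _
  have hG : 0 ≤ ∫ x, g x ^ (r / (r - 1)) ∂μ := by
    refine integral_nonneg_of_ae ?_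
    filter_upwards [hg] with x hx using rpow_nonneg hx _
  have hFG : 0 ≤ ∫ x, f x * g x ∂μ := by
    refine integral_nonneg_of_ae ?_
    filter_upwards [hf, hg] with x hx hy using mul_nonneg hx hy
  have key := integral_mul_le_Lp_mul_Lq_of_nonneg hconj hf hg (hmem hr0 hf hfm hfr)
    (hmem (by positivity) hg hgm hgr)
  calc (∫ x, f x * g x ∂μ) ^ r
      ≤ ((∫ x, f x ^ r ∂μ) ^ (1 / r)
          * (∫ x, g x ^ (r / (r - 1)) ∂μ) ^ (1 / (r / (r - 1)))) ^ r :=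
        rpow_le_rpow hFG key hr0.le
    _ = _ := by
        rw [mul_rpow (by positivity) (by positivity), ← rpow_mul hF, ← rpow_mul hG]
        congr 2
        · rw [one_div_mul_cancel hr0.ne', rpow_one]
        · field_simp

/-- Jensen's inequality for powers with respect to a probability density. -/
theorem integral_mul_density_rpow_le {α : Type*} [MeasurableSpace α] {μ : Measure α} {r : ℝ}
    (hr : 1 ≤ r) {f w : α → ℝ} (hf : 0 ≤ᵐ[μ] f) (hw : 0 ≤ᵐ[μ] w) (hw1 : ∫ x, w x ∂μ = 1)
    (hfr : Integrable (fun x => f x ^ r * w x) μ) :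
    (∫ x, f x * w x ∂μ) ^ r ≤ ∫ x, f x ^ r * w x ∂μ := by
  rcases hr.eq_or_lt with rfl | hr
  · simp
  have hr0 : 0 < r := by linarith
  have hr1 : 0 < r - 1 := by linarith
  have hwi : Integrable w μ := .of_integral_ne_zero (by simp [hw1])
  have e1 : (fun x => (f x * w x ^ (1 / r)) ^ r) =ᵐ[μ] fun x => f x ^ r * w x := by
    filter_upwards [hf, hw] with x hx hy
    have hy : 0 ≤ w x := hy
    rw [mul_rpow hx (by positivity), ← rpow_mul hy, one_div_mul_cancel hr0.ne', rpow_one]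
  have e2 : (fun x => (w x ^ ((r - 1) / r)) ^ (r / (r - 1))) =ᵐ[μ] w := by
    filter_upwards [hw] with x hy
    rw [← rpow_mul hy, div_mul_div_cancel₀ hr0.ne', div_self hr1.ne', rpow_one]
  have e3 : (fun x => f x * w x ^ (1 / r) * w x ^ ((r - 1) / r)) =ᵐ[μ] fun x => f x * w x := by
    filter_upwards [hw] with x hy
    have h1 : 1 / r + (r - 1) / r = 1 := by field_simp; ring
    rw [mul_assoc, ← rpow_add_of_nonneg hy (by positivity) (by positivity), h1, rpow_one]
  have key := integral_mul_rpow_le (μ := μ) hr (f := fun x => f x * w x ^ (1 / r))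
    (g := fun x => w x ^ ((r - 1) / r))
    (by filter_upwards [hf, hw] with x hx hy using mul_nonneg hx (rpow_nonneg hy _))
    (by filter_upwards [hw] with x hy using rpow_nonneg hy _)
    (hwi.aestronglyMeasurable.aemeasurable.pow_const _).aestronglyMeasurable
    (hfr.congr e1.symm) (hwi.congr e2.symm)
  rwa [integral_congr_ae e1, integral_congr_ae e2, integral_congr_ae e3, hw1, one_rpow,
    mul_one] at key

/-- Young's inequality for the exponents `N / q` and `N / (N - q)`, with a non-optimal constant. -/
theorem mul_rpow_le_rpow_add {q N x ε : ℝ} (hq : 0 < q) (hN : q < N) (hx : 0 ≤ x) (hε : 0 ≤ ε) :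
    ε * x ^ q ≤
      x ^ N + (N - q) / N * (N / q) ^ (q / (N - q)) * ε ^ (N / (N - q)) := by
  have hN0 : 0 < N := by linarith
  have hNq : 0 < N - q := by linarith
  have hconj : (N / q).HolderConjugate (N / (N - q)) := by
    rw [Real.holderConjugate_iff]
    refine ⟨(one_lt_div hq).2 hN, ?_⟩
    field_simp
    ring
  have h := Real.young_inequality_of_nonneg (rpow_nonneg hx q) hε hconj
  rw [← rpow_mul hx, mul_div_cancel₀ _ hq.ne'] at h
  have h1 : x ^ N / (N / q) ≤ x ^ N :=
    div_le_self (by positivity) ((one_lt_div hq).2 hN).le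
  have h2 : 1 ≤ (N / q) ^ (q / (N - q)) :=
    one_le_rpow ((one_lt_div hq).2 hN).le (by positivity)
  have h3 : ε ^ (N / (N - q)) / (N / (N - q)) = (N - q) / N * 1 * ε ^ (N / (N - q)) := by
    field_simp
  have h4 : (N - q) / N * 1 * ε ^ (N / (N - q))
      ≤ (N - q) / N * (N / q) ^ (q / (N - q)) * ε ^ (N / (N - q)) := by
    gcongr
  linarith [mul_comm ε (x ^ q)]

/-- The coefficient in the absorbed Young inequality is nonnegative below the threshold. -/
theorem young_coeff_nonneg {q N A ε K : ℝ} (hq : 0 < q) (hN : q < N) (hA : 0 < A) (hε : 0 < ε)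
    (hK : 0 < K) (h : ε ≤ (K / A) ^ ((N - q) / q)) :
    0 ≤ ε - A * ε ^ (N / (N - q)) / K := by
  have hNq : 0 < N - q := by linarith
  have h1 : ε ^ (q / (N - q)) ≤ K / A := by
    calc ε ^ (q / (N - q)) ≤ ((K / A) ^ ((N - q) / q)) ^ (q / (N - q)) :=
          rpow_le_rpow hε.le h (by positivity)
      _ = K / A := by
          rw [← rpow_mul (by positivity), div_mul_div_cancel₀ hq.ne', div_self hNq.ne', rpow_one]
  have h2 : ε ^ (N / (N - q)) = ε * ε ^ (q / (N - q)) := by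
    rw [← rpow_one_add' hε.le (by positivity)]
    congr 1
    field_simp
    ring
  rw [le_div_iff₀ hA] at h1
  rw [sub_nonneg, div_le_iff₀ hK, h2]
  nlinarith

/-- If `k e₂ X` is absorbed by half of the power term, the difference stays above the other half. -/
theorem half_rpow_le_sub {p q k P R X Y b E e₁ e₂ : ℝ} (hp : 0 < p) (hpq : p < q)
    (hP : 0 < P) (hR : 0 < R) (hb : 0 < b) (he₁ : 0 < e₁)
    (hX : b ^ p * R ≤ X) (hholder : X ^ (q / p) ≤ Y * P ^ ((q - p) / p))
    (hcond : 2 * k * P ^ ((q - p) / p) / R ^ ((q - p) / p) ≤ b ^ (q - p) * E)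
    (hE : E * e₂ ≤ e₁) (he₂ : 0 ≤ e₂) :
    e₁ * (1 / 2 * P ^ ((p - q) / p) * X ^ (q / p)) ≤ e₁ * Y - k * e₂ * X := by
  have hqp : 0 < q - p := by linarith
  have hX0 : 0 < X := lt_of_lt_of_le (by positivity) hX
  have hPp : 0 < P ^ ((q - p) / p) := by positivity
  have hRp : 0 < R ^ ((q - p) / p) := by positivity
  have hXp : b ^ (q - p) * R ^ ((q - p) / p) ≤ X ^ ((q - p) / p) := by
    calc b ^ (q - p) * R ^ ((q - p) / p) = (b ^ p * R) ^ ((q - p) / p) := by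
          rw [mul_rpow (by positivity) hR.le, ← rpow_mul hb.le, mul_div_cancel₀ _ hp.ne']
      _ ≤ _ := rpow_le_rpow (by positivity) hX (by positivity)
  have hsplit : X ^ (q / p) = X * X ^ ((q - p) / p) := by
    rw [← rpow_one_add' hX0.le (by positivity)]
    congr 1
    field_simp
    ring
  have hneg : P ^ ((p - q) / p) = (P ^ ((q - p) / p))⁻¹ := by
    rw [← rpow_neg hP.le]
    congr 1
    ring
  have habs : 2 * k * e₂ * P ^ ((q - p) / p) ≤ e₁ * X ^ ((q - p) / p) := by
    rw [div_le_iff₀ hRp] at hcond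
    calc 2 * k * e₂ * P ^ ((q - p) / p) = 2 * k * P ^ ((q - p) / p) * e₂ := by ring
      _ ≤ b ^ (q - p) * E * R ^ ((q - p) / p) * e₂ := by gcongr
      _ = b ^ (q - p) * R ^ ((q - p) / p) * (E * e₂) := by ring
      _ ≤ b ^ (q - p) * R ^ ((q - p) / p) * e₁ := by gcongr
      _ ≤ X ^ ((q - p) / p) * e₁ := by gcongr
      _ = _ := by ring
  have h1 : P ^ ((p - q) / p) * X ^ (q / p) ≤ Y := by
    rw [hneg, inv_mul_le_iff₀ hPp]
    linarith
  have h2 : k * e₂ * X ≤ e₁ * (1 / 2 * P ^ ((p - q) / p) * X ^ (q / p)) := by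
    rw [hneg, hsplit]
    have : k * e₂ * X = 1 / 2 * (P ^ ((q - p) / p))⁻¹ * X * (2 * k * e₂ * P ^ ((q - p) / p)) := by
      field_simp
    rw [this]
    calc _ ≤ 1 / 2 * (P ^ ((q - p) / p))⁻¹ * X * (e₁ * X ^ ((q - p) / p)) := by gcongr
      _ = _ := by ring
  have h3 := mul_le_mul_of_nonneg_left h1 he₁.le
  linarith

/-- Bernoulli-type comparison: `J' ≥ a J + C M J ^ q` bounds the weighted integral of `M`. -/
theorem integral_lt_of_bernoulli_deriv_ge {J J' M : ℝ → ℝ} {a C q t : ℝ} (ht : 0 ≤ t) (hq : 1 < q)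
    (hJ : ∀ s ∈ Icc 0 t, 0 < J s) (hJ' : ∀ s ∈ Icc 0 t, HasDerivAt J (J' s) s)
    (hM : ContinuousOn M (Icc 0 t))
    (hle : ∀ s ∈ Icc 0 t, a * J s + C * M s * J s ^ q ≤ J' s) :
    (q - 1) * C * (∫ s in (0:ℝ)..t, M s * exp (a * (q - 1) * s)) < J 0 ^ (1 - q) := by
  set G : ℝ → ℝ := fun s => J s ^ (1 - q) * exp (a * (q - 1) * s) with hG
  have hGd : ∀ s ∈ Icc 0 t, HasDerivAt G
      (J' s * (1 - q) * J s ^ (1 - q - 1) * exp (a * (q - 1) * s)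
        + J s ^ (1 - q) * (exp (a * (q - 1) * s) * (a * (q - 1)))) s := by
    intro s hs
    have h1 := (hJ' s hs).rpow_const (p := 1 - q) (Or.inl (hJ s hs).ne')
    have h2 : HasDerivAt (fun s => exp (a * (q - 1) * s))
        (exp (a * (q - 1) * s) * (a * (q - 1))) s := by
      simpa using ((hasDerivAt_id s).const_mul (a * (q - 1))).exp
    exact h1.mul h2
  have hcont : ContinuousOn (fun s => -((q - 1) * C) * (M s * exp (a * (q - 1) * s)))
      (Icc 0 t) := by fun_prop
  have key := intervalIntegral.sub_le_integral_of_hasDeriv_right_of_le (g := G) ht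
    (fun s hs => (hGd s hs).continuousAt.continuousWithinAt)
    (fun s hs => (hGd s (Ioo_subset_Icc_self hs)).hasDerivWithinAt)
    hcont.integrableOn_Icc (by
      intro s hs
      have hs := Ioo_subset_Icc_self hs
      have hJs := hJ s hs
      have e1 : J s ^ (1 - q - 1) * J s ^ q = 1 := by
        rw [← rpow_add hJs]
        simp
      have e2 : J s ^ (1 - q) = J s ^ (1 - q - 1) * J s := by
        rw [← rpow_add_one hJs.ne', sub_add_cancel]
      have hw : 0 ≤ (q - 1) * J s ^ (1 - q - 1) * exp (a * (q - 1) * s) := by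
        have : 0 ≤ q - 1 := by linarith
        positivity
      have h := mul_le_mul_of_nonneg_left (hle s hs) hw
      rw [e2]
      linear_combination h - (q - 1) * C * M s * exp (a * (q - 1) * s) * e1)
  rw [intervalIntegral.integral_const_mul] at key
  have hpos : 0 < G t := mul_pos (rpow_pos_of_pos (hJ t ⟨ht, le_rfl⟩) _) (exp_pos _)
  have h0 : G 0 = J 0 ^ (1 - q) := by simp [hG]
  linarith

/-- Pathwise upper bound for the blow-up time in the case `m + n > q`
(Theorem 5.1, case 2): on any interval `[0,T]` on which the solution exists,
`(q−1)·C·∫₀^t min(e^{(q−1)ηβ(s)}, e^{(m+n−1)ηβ(s)})·e^{(−λ₁+γ)(q−1)s} ds < J(0)^{1−q}`. -/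
theorem statement12 {d : ℕ} (D : Set (EuclideanSpace ℝ (Fin d)))
    (hDmeas : MeasurableSet D) (hD0 : 0 < volume D) (hDfin : volume D < ⊤)
    (T : ℝ) (hT : 0 < T)
    (k δ η γ lam1 : ℝ) (hk : 0 < k) (hδ : 0 ≤ δ) (hη : 0 ≤ η) (hlam : 0 < lam1)
    (p q n m : ℝ) (hn : 1 < n) (hm : m = 0 ∨ 1 ≤ m)
    (hp : 1 < p) (hpq : p < q) (hqmn : q < m + n)
    (φ : EuclideanSpace ℝ (Fin d) → ℝ) (hφmeas : Measurable φ)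
    (hφnn : ∀ x ∈ D, 0 ≤ φ x)
    (hφ_int : (∫ y in D, φ y) = 1)
    (hφ1 : IntegrableOn (fun y => φ y ^ (q / (q - p))) D)
    (hφ2 : IntegrableOn (fun y => φ y ^ (n / (n - 1))) D)
    (hφ3 : IntegrableOn (fun y => φ y ^ (p + 1)) D)
    (β : ℝ → ℝ) (hβ : ContinuousOn β (Icc 0 T))
    (b : ℝ) (hb : 1 < b)
    -- the third condition of (B1), with `β*(T) = sup_{0≤s≤T}|β(s)|`
    (hcond : 2 * k * (∫ y in D, φ y ^ (q / (q - p))) ^ ((q - p) / p)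
        / (∫ y in D, φ y ^ (p + 1)) ^ ((q - p) / p)
      ≤ b ^ (q - p) * exp (-(η * (q - 1) * (⨆ s : Icc (0:ℝ) T, |β (s : ℝ)|))))
    (v : ℝ → EuclideanSpace ℝ (Fin d) → ℝ)
    (hv_nn : ∀ t ∈ Icc 0 T, ∀ x ∈ D, 0 ≤ v t x)
    (hv_lb : ∀ t ∈ Icc 0 T, ∀ x ∈ D, b * φ x ≤ v t x)
    (hv1 : ∀ t ∈ Icc 0 T, IntegrableOn (fun y => v t y ^ q) D)
    (hv2 : ∀ t ∈ Icc 0 T, IntegrableOn (fun y => v t y ^ n) D)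
    (hv3 : ∀ t ∈ Icc 0 T, IntegrableOn (fun x => v t x ^ p * φ x) D)
    (hv4 : ∀ t ∈ Icc 0 T, IntegrableOn (fun x => v t x ^ m * φ x) D)
    (hv5 : ∀ t ∈ Icc 0 T, IntegrableOn (fun x => v t x * φ x) D)
    (J : ℝ → ℝ) (hJ : ∀ t ∈ Icc 0 T, J t = ∫ x in D, v t x * φ x)
    (hJmono : ∀ t ∈ Icc 0 T, J 0 ≤ J t)
    -- `J` is differentiable, with derivative given by the identity obtained from
    -- the transformed PDE via `−Δφ = λ₁φ`, `∫_D φ = 1` and integration by parts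
    (hJ' : ∀ t ∈ Icc 0 T, HasDerivAt J
      ((-lam1 + γ) * J t
        + exp ((q - 1) * η * β t) * (∫ y in D, v t y ^ q)
        - k * exp ((p - 1) * η * β t) * (∫ x in D, v t x ^ p * φ x)
        + δ * exp ((m + n - 1) * η * β t) * (∫ z in D, v t z ^ m * φ z)
            * (∫ y in D, v t y ^ n)) t)
    (A₀ : ℝ)
    (hA₀ : A₀ = ((m + n - q) / (m + n)) * ((m + n) / q) ^ (q / (m + n - q)))
    (ε₀ : ℝ) (hε₀pos : 0 < ε₀) (hε₀ : ε₀ ≤ (J 0 ^ q / A₀) ^ ((m + n - q) / q))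
    (C : ℝ)
    (hC : C = (1 / 2) * (∫ x in D, φ x ^ (q / (q - p))) ^ ((p - q) / p)
      + δ * (ε₀ - A₀ * ε₀ ^ ((m + n) / (m + n - q)) / J 0 ^ q)
          * (∫ x in D, φ x ^ (n / (n - 1))) ^ (1 - n)) :
    ∀ t ∈ Icc 0 T,
      (q - 1) * C * (∫ s in (0:ℝ)..t,
          min (exp ((q - 1) * η * β s)) (exp ((m + n - 1) * η * β s))
            * exp ((-lam1 + γ) * (q - 1) * s))
        < J 0 ^ (1 - q) := by
  have hμ : ∀ {P : EuclideanSpace ℝ (Fin d) → Prop}, (∀ x ∈ D, P x) →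
      ∀ᵐ x ∂(volume.restrict D), P x := fun h => (ae_restrict_iff' hDmeas).2 (ae_of_all _ h)
  have hq0 : 0 < q := by linarith
  have hp0 : 0 < p := by linarith
  have hqp : 0 < q - p := by linarith
  have hN0 : 0 < m + n := by linarith
  have hφae : 0 ≤ᵐ[volume.restrict D] φ := hμ hφnn
  have hzero : ¬ φ =ᵐ[volume.restrict D] 0 := fun h => by
    simp [integral_congr_ae h] at hφ_int
  have hpow : ∀ r : ℝ, 0 < r → IntegrableOn (fun y => φ y ^ r) D → 0 < ∫ y in D, φ y ^ r := by
    intro r hr hi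
    have h0 : 0 ≤ᵐ[volume.restrict D] fun y => φ y ^ r :=
      hμ fun x hx => rpow_nonneg (hφnn x hx) r
    refine (integral_nonneg_of_ae h0).lt_of_ne fun h => hzero ?_
    filter_upwards [(integral_eq_zero_iff_of_nonneg_ae h0 hi).1 h.symm, hφae] with x hx hx0
    exact (rpow_eq_zero hx0 hr.ne').1 hx
  have hP := hpow _ (by positivity) hφ1
  have hQ := hpow _ (div_pos (by linarith) (by linarith)) hφ2
  have hR := hpow _ (by linarith) hφ3
  have h0T : (0 : ℝ) ∈ Icc 0 T := ⟨le_rfl, hT.le⟩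
  have hJ0 : 0 < J 0 := by
    rw [hJ 0 h0T]
    have h0 : 0 ≤ᵐ[volume.restrict D] fun x => v 0 x * φ x :=
      hμ fun x hx => mul_nonneg (hv_nn 0 h0T x hx) (hφnn x hx)
    refine (integral_nonneg_of_ae h0).lt_of_ne fun h => hzero ?_
    filter_upwards [(integral_eq_zero_iff_of_nonneg_ae h0 (hv5 0 h0T)).1 h.symm,
      hμ (hv_lb 0 h0T), hφae] with x hx hx1 hx0
    have hx0 : 0 ≤ φ x := hx0
    rcases mul_eq_zero.1 hx with h | h
    · rw [h] at hx1
      exact le_antisymm (nonpos_of_mul_nonpos_right hx1 (by linarith)) hx0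
    · exact h
  have hA₀pos : 0 < A₀ := by
    have : 0 < m + n - q := by linarith
    rw [hA₀]
    positivity
  set c := ε₀ - A₀ * ε₀ ^ ((m + n) / (m + n - q)) / J 0 ^ q with hc
  have hc0 : 0 ≤ c := young_coeff_nonneg hq0 hqmn hA₀pos hε₀pos (by positivity) hε₀
  intro t ht
  have hsub : Icc 0 t ⊆ Icc 0 T := Icc_subset_Icc_right ht.2
  have hβt := hβ.mono hsub
  refine integral_lt_of_bernoulli_deriv_ge ht.1 (hp.trans hpq)
    (fun s hs => hJ0.trans_le (hJmono s (hsub hs))) (fun s hs => hJ' s (hsub hs))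
    (by fun_prop) fun s hs => ?_
  replace hs := hsub hs
  have hJs : 0 < J s := hJ0.trans_le (hJmono s hs)
  have hvae : 0 ≤ᵐ[volume.restrict D] v s := hμ (hv_nn s hs)
  have hjensen : ∀ r : ℝ, 1 ≤ r → IntegrableOn (fun x => v s x ^ r * φ x) D →
      J s ^ r ≤ ∫ x in D, v s x ^ r * φ x := fun r hr hi => by
    rw [hJ s hs]
    exact integral_mul_density_rpow_le hr hvae hφae hφ_int hi
  have hvq : ∀ x ∈ D, (v s x ^ p) ^ (q / p) = v s x ^ q := fun x hx => by
    rw [← rpow_mul (hv_nn s hs x hx), mul_div_cancel₀ _ hp0.ne']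
  have hexp : q / p / (q / p - 1) = q / (q - p) := by
    field_simp
  have hX : b ^ p * (∫ y in D, φ y ^ (p + 1)) ≤ ∫ x in D, v s x ^ p * φ x := by
    rw [← integral_const_mul]
    refine integral_mono_ae (hφ3.const_mul _) (hv3 s hs) (hμ fun x hx => ?_)
    have hx0 := hφnn x hx
    calc b ^ p * φ x ^ (p + 1) = (b * φ x) ^ p * φ x := by
          rw [mul_rpow (by linarith) hx0, rpow_add_one' hx0 (by linarith), mul_assoc]
      _ ≤ v s x ^ p * φ x := by
          gcongr
          exact hv_lb s hs x hx
  have hholder : (∫ x in D, v s x ^ p * φ x) ^ (q / p)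
      ≤ (∫ y in D, v s y ^ q) * (∫ y in D, φ y ^ (q / (q - p))) ^ ((q - p) / p) := by
    have h := integral_mul_rpow_le (μ := volume.restrict D) ((one_lt_div hp0).2 hpq)
      (f := fun x => v s x ^ p) (g := φ) (hμ fun x hx => rpow_nonneg (hv_nn s hs x hx) p) hφae
      hφmeas.aestronglyMeasurable ((hv1 s hs).congr (hμ fun x hx => (hvq x hx).symm))
      (by rw [hexp]; exact hφ1)
    rwa [hexp, setIntegral_congr_fun hDmeas hvq, div_sub_one hp0.ne'] at h
  have hβsup : |β s| ≤ ⨆ s : Icc (0:ℝ) T, |β (s : ℝ)| := by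
    have hbdd := (isCompact_Icc.image_of_continuousOn hβ.abs).bddAbove
    rw [image_eq_range] at hbdd
    exact le_ciSup hbdd (⟨s, hs⟩ : Icc (0:ℝ) T)
  have hE : exp (-(η * (q - 1) * (⨆ s : Icc (0:ℝ) T, |β (s : ℝ)|))) * exp ((p - 1) * η * β s)
      ≤ exp ((q - 1) * η * β s) := by
    rw [← exp_add, exp_le_exp]
    have h1 : η * (q - 1) * |β s| ≤ η * (q - 1) * ⨆ s : Icc (0:ℝ) T, |β (s : ℝ)| :=
      mul_le_mul_of_nonneg_left hβsup (mul_nonneg hη (by linarith))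
    have h2 : η * (q - p) * -|β s| ≤ η * (q - p) * β s :=
      mul_le_mul_of_nonneg_left (neg_abs_le _) (mul_nonneg hη hqp.le)
    have h3 : 0 ≤ η * (p - 1) * |β s| := by
      have : 0 ≤ p - 1 := by linarith
      positivity
    linarith
  have hmain := half_rpow_le_sub hp0 hpq hP hR (by linarith) (exp_pos _) hX hholder hcond hE
    (exp_pos _).le
  have hXq : J s ^ q ≤ (∫ x in D, v s x ^ p * φ x) ^ (q / p) := by
    calc J s ^ q = (J s ^ p) ^ (q / p) := by rw [← rpow_mul hJs.le, mul_div_cancel₀ _ hp0.ne']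
      _ ≤ _ := rpow_le_rpow (by positivity) (hjensen p hp.le (hv3 s hs)) (by positivity)
  have hvm : J s ^ m ≤ ∫ z in D, v s z ^ m * φ z := by
    rcases hm with rfl | hm
    · simp [hφ_int]
    · exact hjensen m hm (hv4 s hs)
  have hvn : J s ^ n * (∫ x in D, φ x ^ (n / (n - 1))) ^ (1 - n) ≤ ∫ y in D, v s y ^ n := by
    have h := integral_mul_rpow_le hn hvae hφae hφmeas.aestronglyMeasurable (hv2 s hs) hφ2
    rw [← hJ s hs] at h
    rw [show 1 - n = -(n - 1) by ring, rpow_neg hQ.le, ← div_eq_mul_inv,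
      div_le_iff₀ (by positivity)]
    exact h
  have hyoung : c * J s ^ q ≤ J s ^ (m + n) := by
    have h := mul_rpow_le_rpow_add hq0 hqmn hJs.le hε₀pos.le
    rw [← hA₀] at h
    have h1 : 1 ≤ J s ^ q / J 0 ^ q := by
      rw [one_le_div (by positivity)]
      exact rpow_le_rpow hJ0.le (hJmono s hs) hq0.le
    have h2 : 0 ≤ A₀ * ε₀ ^ ((m + n) / (m + n - q)) := by positivity
    have h3 := mul_le_mul_of_nonneg_left h1 h2
    calc c * J s ^ q = ε₀ * J s ^ q
          - A₀ * ε₀ ^ ((m + n) / (m + n - q)) * (J s ^ q / J 0 ^ q) := by rw [hc]; ring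
      _ ≤ _ := by linarith
  have hprod : c * J s ^ q * (∫ x in D, φ x ^ (n / (n - 1))) ^ (1 - n)
      ≤ (∫ z in D, v s z ^ m * φ z) * (∫ y in D, v s y ^ n) := by
    calc _ ≤ J s ^ (m + n) * (∫ x in D, φ x ^ (n / (n - 1))) ^ (1 - n) := by gcongr
      _ = J s ^ m * (J s ^ n * (∫ x in D, φ x ^ (n / (n - 1))) ^ (1 - n)) := by
          rw [rpow_add hJs, mul_assoc]
      _ ≤ _ := mul_le_mul hvm hvn (by positivity) ((by positivity : 0 ≤ J s ^ m).trans hvm)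
  set M := min (exp ((q - 1) * η * β s)) (exp ((m + n - 1) * η * β s))
  have hfirst : M * (1 / 2 * (∫ y in D, φ y ^ (q / (q - p))) ^ ((p - q) / p) * J s ^ q)
      ≤ exp ((q - 1) * η * β s) * (∫ y in D, v s y ^ q)
        - k * exp ((p - 1) * η * β s) * (∫ x in D, v s x ^ p * φ x) := by
    refine le_trans ?_ hmain
    gcongr
    exact min_le_left _ _
  have hsecond : M * (δ * (c * J s ^ q * (∫ x in D, φ x ^ (n / (n - 1))) ^ (1 - n)))
      ≤ exp ((m + n - 1) * η * β s)
        * (δ * ((∫ z in D, v s z ^ m * φ z) * (∫ y in D, v s y ^ n))) := by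
    gcongr
    exact min_le_right _ _
  rw [hC]
  linarith
end
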